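/- arXiv:2504.15851 — 2 statements merged into one kernel-verified Lean document; each statement's English description precedes it below -/
import Mathlib

section
/- Let (x, y, z) be a KKT point of NLP(p). Then SMFCQ holds at (x, y, z) if and only if (y, z) is the unique element of the multiplier set M_p(x). -/
/-!
Write `a i` and `b j` for the derivatives of the equality and inequality constraints at `x`.
Stationarity is affine in the multiplier, so the difference of two multipliers is a linear
dependence among the `a i` and the active `b j` whose coefficients on the weakly active constraints
are nonnegative; conversely, since the strongly active multipliers are positive, every such
dependence, scaled by a small `t > 0`, can be added to `(y, z)` without leaving the multiplier set.
Hence `(y, z)` is the unique multiplier iff the only dependence with this sign pattern is the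
trivial one (`multSet_eq_singleton_iff`).

Given SMFCQ, evaluating such a dependence at the direction `d` of SMFCQ kills its weakly active
coefficients, and linear independence kills the others. For the converse, the absence of nontrivial
dependences contains the linear independence, and what remains is a theorem of the
alternative (`exists_dependence`, due to Motzkin): if no `d`
annihilates all strongly active derivatives while making all weakly active ones negative, then
there is a dependence whose weakly active coefficients are nonnegative and not all zero. It follows
by separating the image of the common kernel from the open negative orthant, and then using that a
functional vanishing on a common kernel is in the span of the functionals defining it.
-/

open Filter Topology Set Matrix

attribute [local instance] Classical.propDecidable

namespace SensNLP

variable {n l me mi : ℕ}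
variable (f : (Fin n → ℝ) → (Fin l → ℝ) → ℝ)
  (g : (Fin n → ℝ) → (Fin l → ℝ) → Fin me → ℝ)
  (h : (Fin n → ℝ) → (Fin l → ℝ) → Fin mi → ℝ)
  (p : Fin l → ℝ) (x : Fin n → ℝ) (y : Fin me → ℝ) (z : Fin mi → ℝ)
  (hdir : Fin l → ℝ)

/-- The Lagrangian `L(x,y,z,p) = f(x,p) + yᵀ g(x,p) + zᵀ h(x,p)`. -/
noncomputable def Lag : ℝ :=
  f x p + ∑ i, y i * g x p i + ∑ j, z j * h x p j

/-- The gradient (with respect to `x`) of a scalar function, as a vector. -/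
noncomputable def gradx (φ : (Fin n → ℝ) → ℝ) (x : Fin n → ℝ) : Fin n → ℝ :=
  fun j => fderiv ℝ φ x (Pi.single j 1)

/-- The quadratic form `dᵀ ∇²φ(x) d` of the Hessian of a scalar function. -/
noncomputable def hessQ (φ : (Fin n → ℝ) → ℝ) (x d : Fin n → ℝ) : ℝ :=
  fderiv ℝ (fun x' => fderiv ℝ φ x' d) x d

/-- KKT conditions: stationarity of the Lagrangian in `x`, primal feasibility,
dual feasibility and complementarity. -/
def IsKKT : Prop :=
  fderiv ℝ (fun x' => Lag f g h p x' y z) x = 0 ∧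
  g x p = 0 ∧ h x p ≤ 0 ∧ 0 ≤ z ∧ ∑ j, z j * h x p j = 0

/-- The multiplier set `M_p(x)`. -/
def MultSet : Set ((Fin me → ℝ) × (Fin mi → ℝ)) :=
  {yz | IsKKT f g h p x yz.1 yz.2}

/-- LICQ: linear independence of the gradients of equality and active inequality
constraints. -/
def LICQ : Prop :=
  LinearIndependent ℝ
    (fun i : Fin me ⊕ {j : Fin mi // h x p j = 0} =>
      Sum.elim (fun i => gradx (fun x' => g x' p i) x)
        (fun j => gradx (fun x' => h x' p j.1) x) i)

/-- MFCQ. -/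
def MFCQ : Prop :=
  LinearIndependent ℝ (fun i : Fin me => gradx (fun x' => g x' p i) x) ∧
  ∃ d : Fin n → ℝ,
    (∀ i, fderiv ℝ (fun x' => g x' p i) x d = 0) ∧
    (∀ j, h x p j = 0 → fderiv ℝ (fun x' => h x' p j) x d < 0)

/-- SMFCQ (relative to a multiplier `z`). -/
def SMFCQ : Prop :=
  LinearIndependent ℝ
    (fun i : Fin me ⊕ {j : Fin mi // h x p j = 0 ∧ 0 < z j} =>
      Sum.elim (fun i => gradx (fun x' => g x' p i) x)
        (fun j => gradx (fun x' => h x' p j.1) x) i) ∧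
  ∃ d : Fin n → ℝ,
    (∀ i, fderiv ℝ (fun x' => g x' p i) x d = 0) ∧
    (∀ j, h x p j = 0 → 0 < z j → fderiv ℝ (fun x' => h x' p j) x d = 0) ∧
    (∀ j, h x p j = 0 → z j = 0 → fderiv ℝ (fun x' => h x' p j) x d < 0)

/-- CRCQ at `x` (for parameter `p`): every subfamily of gradients of equality
constraints and active inequality constraints has constant rank near `x`. -/
def CRCQ : Prop :=
  ∃ W ∈ 𝓝 x, ∀ (J : Finset (Fin me)) (I : Finset (Fin mi)),
    (∀ i ∈ I, h x p i = 0) →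
    ∃ r : ℕ, ∀ x' ∈ W,
      Module.finrank ℝ ↥(Submodule.span ℝ
        ((fun i => gradx (fun x'' => g x'' p i) x') '' ↑J ∪
         (fun i => gradx (fun x'' => h x'' p i) x') '' ↑I)) = r

/-- The critical cone `C_p(x)`. -/
def criticalCone : Set (Fin n → ℝ) :=
  {d | fderiv ℝ (fun x' => f x' p) x d ≤ 0 ∧
       (∀ i, fderiv ℝ (fun x' => g x' p i) x d = 0) ∧
       (∀ j, h x p j = 0 → fderiv ℝ (fun x' => h x' p j) x d ≤ 0)}

/-- The set `D_p(x;z)` used in the strong second-order sufficiency condition. -/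
def Dset : Set (Fin n → ℝ) :=
  {d | (∀ i, fderiv ℝ (fun x' => g x' p i) x d = 0) ∧
       (∀ j, h x p j = 0 → 0 < z j → fderiv ℝ (fun x' => h x' p j) x d = 0)}

/-- SOSC. -/
def SOSC : Prop :=
  ∃ yz ∈ MultSet f g h p x, ∀ d ∈ criticalCone f g h p x, d ≠ 0 →
    0 < hessQ (fun x' => Lag f g h p x' yz.1 yz.2) x d

/-- SSOSC. -/
def SSOSC : Prop :=
  ∃ yz ∈ MultSet f g h p x, ∀ d ∈ Dset g h p x yz.2, d ≠ 0 →
    0 < hessQ (fun x' => Lag f g h p x' yz.1 yz.2) x d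

/-- GSSOSC. -/
def GSSOSC : Prop :=
  ∀ yz ∈ MultSet f g h p x, ∀ d ∈ Dset g h p x yz.2, d ≠ 0 →
    0 < hessQ (fun x' => Lag f g h p x' yz.1 yz.2) x d

/-- Strict complementarity slackness: no weakly active constraint. -/
def SCS : Prop :=
  ∀ j, h x p j = 0 → z j ≠ 0

/-- `x` is a local solution (local minimizer) of NLP(p). -/
def IsLocalSol : Prop :=
  g x p = 0 ∧ h x p ≤ 0 ∧
  ∃ W ∈ 𝓝 x, ∀ x' ∈ W, g x' p = 0 → h x' p ≤ 0 → f x p ≤ f x' p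

/-- The directional critical set `K_p(x,z;h)`. -/
def Kset : Set (Fin n → ℝ) :=
  {d | (∀ i, fderiv ℝ (fun x' => g x' p i) x d
          + fderiv ℝ (fun p' => g x p' i) p hdir = 0) ∧
       (∀ j, h x p j = 0 → 0 < z j →
          fderiv ℝ (fun x' => h x' p j) x d
          + fderiv ℝ (fun p' => h x p' j) p hdir = 0) ∧
       (∀ j, h x p j = 0 → z j = 0 →
          fderiv ℝ (fun x' => h x' p j) x d
          + fderiv ℝ (fun p' => h x p' j) p hdir ≤ 0)}

/-- The objective of the sensitivity QP:
`½ dᵀ ∇²ₓₓL d + hᵀ ∇²ₚₓL d`. -/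
noncomputable def QPobj (d : Fin n → ℝ) : ℝ :=
  (1 / 2) * hessQ (fun x' => Lag f g h p x' y z) x d +
    fderiv ℝ (fun p' => fderiv ℝ (fun x'' => Lag f g h p' x'' y z) x d) p hdir

/-- The set `S_p(x;h)` of multipliers maximizing the linear functional
`(y,z) ↦ yᵀ (J_p g) h + zᵀ (J_p h) h` over `M_p(x)`. -/
def Sset : Set ((Fin me → ℝ) × (Fin mi → ℝ)) :=
  {yz ∈ MultSet f g h p x | ∀ yz' ∈ MultSet f g h p x,
    (∑ i, yz'.1 i * fderiv ℝ (fun p' => g x p' i) p hdir) +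
      (∑ j, yz'.2 j * fderiv ℝ (fun p' => h x p' j) p hdir) ≤
    (∑ i, yz.1 i * fderiv ℝ (fun p' => g x p' i) p hdir) +
      (∑ j, yz.2 j * fderiv ℝ (fun p' => h x p' j) p hdir)}

/-- A `PC¹` (piecewise continuously differentiable) function at a point. -/
def PC1At {N' : ℕ} (F : (Fin l → ℝ) → (Fin N' → ℝ)) (p : Fin l → ℝ) : Prop :=
  ∃ N ∈ 𝓝 p, ∃ k : ℕ, ∃ Fs : Fin k → (Fin l → ℝ) → (Fin N' → ℝ),
    ContinuousOn F N ∧ (∀ i, ContDiffOn ℝ 1 (Fs i) N) ∧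
    ∀ q ∈ N, ∃ i, F q = Fs i q

/-- A piecewise linear (continuous selection of finitely many linear maps) function. -/
def IsPiecewiseLinear {N' : ℕ} (D : (Fin l → ℝ) → (Fin N' → ℝ)) : Prop :=
  Continuous D ∧ ∃ k : ℕ, ∃ T : Fin k → (Fin l → ℝ) →ₗ[ℝ] (Fin N' → ℝ),
    ∀ v, ∃ i, D v = T i v


/-! ### A theorem of the alternative -/

/-- Motzkin's theorem of the alternative, in the direction that needs separation: if no vector lies
in the kernel of every `a i` and makes every `b k` negative, then the `a i` and `b k` satisfy a linear
dependence whose coefficients on the `b k` are nonnegative and not all zero. -/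
lemma exists_dependence {V ι κ : Type*} [AddCommGroup V] [Module ℝ V] [Fintype ι] [Fintype κ]
    (a : ι → V →ₗ[ℝ] ℝ) (b : κ → V →ₗ[ℝ] ℝ)
    (hd : ¬ ∃ d, (∀ i, a i d = 0) ∧ ∀ k, b k d < 0) :
    ∃ (u : ι → ℝ) (v : κ → ℝ), 0 ≤ v ∧ v ≠ 0 ∧ ∑ i, u i • a i + ∑ k, v k • b k = 0 := by
  let S : Submodule ℝ V := ⨅ i, LinearMap.ker (a i)
  let R : Submodule ℝ (κ → ℝ) := S.map (LinearMap.pi b)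
  let O : Set (κ → ℝ) := Set.univ.pi fun _ => Set.Iio 0
  have hOo : IsOpen O := isOpen_set_pi Set.finite_univ fun _ _ => isOpen_Iio
  have hOc : Convex ℝ O := convex_pi fun _ _ => convex_Iio 0
  have hdisj : Disjoint O (R : Set (κ → ℝ)) := by
    rw [Set.disjoint_left]
    rintro w hw ⟨d, hdS, rfl⟩
    refine hd ⟨d, fun i => ?_, fun k => by simpa using hw k trivial⟩
    simpa using (Submodule.mem_iInf _).1 hdS i
  obtain ⟨F, s, hFO, hFR⟩ := geometric_hahn_banach_open hOc hOo R.convex hdisj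
  have hs : s ≤ 0 := by simpa using hFR 0 R.zero_mem
  -- `F` is bounded below on the subspace `R`, hence vanishes there.
  have hF0 : ∀ r ∈ R, F r = 0 := by
    intro r hr
    by_contra hne
    have := hFR (((s - 1) / F r) • r) (R.smul_mem _ hr)
    rw [map_smul, smul_eq_mul, div_mul_cancel₀ _ hne] at this
    linarith
  have hrep : ∀ w, F w = ∑ k, F (Pi.single k 1) * w k := by
    intro w
    conv_lhs => rw [← Finset.univ_sum_single w]
    rw [map_sum]
    refine Finset.sum_congr rfl fun k _ => ?_
    rw [mul_comm, ← smul_eq_mul, ← map_smul, ← Pi.single_smul', smul_eq_mul, mul_one]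
  have hv0 : 0 ≤ fun k => F (Pi.single k 1) := by
    intro k
    by_contra hneg
    simp only [Pi.zero_apply, not_le] at hneg
    -- The points `t • (-1) - e_k`, with `t > 0`, are in `O`; let `t → 0`.
    have hpt : ∀ t : ℝ, 0 < t → t * F (fun _ => -1) - F (Pi.single k 1) < 0 := by
      intro t ht
      have := hFO (t • (fun _ => -1) - Pi.single k 1) (by
        intro j _
        by_cases hj : j = k
        · subst hj; simp; linarith
        · simp [hj, ht])
      rw [map_sub, map_smul, smul_eq_mul] at this
      linarith
    have hlim : Tendsto (fun t : ℝ => t * F (fun _ => -1) - F (Pi.single k 1)) (𝓝[>] 0)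
        (𝓝 (0 * F (fun _ => -1) - F (Pi.single k 1))) :=
      (Continuous.tendsto (by fun_prop) 0).mono_left nhdsWithin_le_nhds
    have := le_of_tendsto hlim (eventually_mem_nhdsWithin.mono fun t ht => (hpt t ht).le)
    linarith
  have hvne : (fun k => F (Pi.single k 1)) ≠ 0 := by
    intro h0
    have h1 := hFO (fun _ => -1) (fun _ _ => by simp)
    rw [hrep] at h1
    have h2 : ∀ k, F (Pi.single k 1) = 0 := fun k => congrFun h0 k
    -- `F = 0` would make `0 < s ≤ 0`.
    simp only [h2, zero_mul, Finset.sum_const_zero] at h1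
    linarith
  have hspan : (∑ k, F (Pi.single k 1) • b k) ∈ Submodule.span ℝ (Set.range a) := by
    refine mem_span_of_iInf_ker_le_ker fun d hdS => ?_
    have := hF0 _ (Submodule.mem_map_of_mem (f := LinearMap.pi b) hdS)
    rw [hrep] at this
    simpa [LinearMap.sum_apply] using this
  obtain ⟨c, hc⟩ := (Submodule.mem_span_range_iff_exists_fun ℝ).1 hspan
  refine ⟨-c, _, hv0, hvne, ?_⟩
  rw [← hc]
  ext d
  simp [LinearMap.sum_apply]

/-! ### Gradients, derivatives and complementarity -/

/-- Taking coordinates of a functional is injective, so independence of gradients is independence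
of derivatives. -/
lemma linearIndependent_gradx_iff {n : ℕ} {ι : Type*} (φ : ι → (Fin n → ℝ) → ℝ) (x : Fin n → ℝ) :
    LinearIndependent ℝ (fun i => gradx (φ i) x) ↔
      LinearIndependent ℝ (fun i => fderiv ℝ (φ i) x) := by
  let T : ((Fin n → ℝ) →L[ℝ] ℝ) →ₗ[ℝ] (Fin n → ℝ) :=
    { toFun := fun A j => A (Pi.single j 1)
      map_add' := fun _ _ => rfl
      map_smul' := fun _ _ => rfl }
  have hT : LinearMap.ker T = ⊥ := by
    rw [LinearMap.ker_eq_bot']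
    intro A hA
    apply ContinuousLinearMap.coe_injective
    refine LinearMap.pi_ext' fun j => ?_
    ext
    have hAj : A (Pi.single j 1) = 0 := congrFun hA j
    simpa using hAj
  exact T.linearIndependent_iff hT (v := fun i => fderiv ℝ (φ i) x)

lemma fderiv_Lag
    (hf : ContDiff ℝ 2 fun q : (Fin n → ℝ) × (Fin l → ℝ) => f q.1 q.2)
    (hg : ∀ i : Fin me, ContDiff ℝ 2 fun q : (Fin n → ℝ) × (Fin l → ℝ) => g q.1 q.2 i)
    (hh : ∀ j : Fin mi, ContDiff ℝ 2 fun q : (Fin n → ℝ) × (Fin l → ℝ) => h q.1 q.2 j) :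
    fderiv ℝ (fun x' => Lag f g h p x' y z) x =
      fderiv ℝ (fun x' => f x' p) x + ∑ i, y i • fderiv ℝ (fun x' => g x' p i) x
        + ∑ j, z j • fderiv ℝ (fun x' => h x' p j) x := by
  have key : ∀ φ : (Fin n → ℝ) × (Fin l → ℝ) → ℝ, ContDiff ℝ 2 φ →
      DifferentiableAt ℝ (fun x' => φ (x', p)) x := fun φ hφ =>
    ((hφ.differentiable (by norm_num)).comp
      (differentiable_id.prodMk (differentiable_const p))).differentiableAt
  exact (((key _ hf).hasFDerivAt.add
    (HasFDerivAt.fun_sum fun i _ => (key _ (hg i)).hasFDerivAt.const_mul (y i))).add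
    (HasFDerivAt.fun_sum fun j _ => (key _ (hh j)).hasFDerivAt.const_mul (z j))).fderiv

/-- For feasible `x` and `z ≥ 0` every term of the complementarity sum is nonpositive, so the sum
vanishes iff every multiplier of an inactive constraint does. -/
lemma complementarity_iff {η ζ : Fin mi → ℝ} (hη : η ≤ 0) (hζ : 0 ≤ ζ) :
    ∑ j, ζ j * η j = 0 ↔ ∀ j, η j ≠ 0 → ζ j = 0 := by
  rw [Finset.sum_eq_zero_iff_of_nonpos fun j _ => mul_nonpos_of_nonneg_of_nonpos (hζ j) (hη j)]
  simp only [Finset.mem_univ, true_implies, mul_eq_zero]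
  exact forall_congr' fun j => by tauto

/-- A small enough step along `v` keeps `z` nonnegative as soon as `v` is nonnegative wherever `z`
vanishes. -/
lemma exists_pos_add_smul_nonneg {ζ v : Fin mi → ℝ} (hζ : 0 ≤ ζ)
    (hv : ∀ j, ζ j = 0 → 0 ≤ v j) : ∃ t : ℝ, 0 < t ∧ 0 ≤ ζ + t • v := by
  have hev : ∀ᶠ t : ℝ in 𝓝[>] 0, ∀ j, 0 ≤ ζ j + t * v j := by
    rw [eventually_all]
    intro j
    rcases (hζ j).eq_or_lt with h0 | h0
    · filter_upwards [self_mem_nhdsWithin] with t ht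
      have := mul_nonneg (le_of_lt ht) (hv j h0.symm)
      simpa [← h0] using this
    · have hlim : Tendsto (fun t : ℝ => ζ j + t * v j) (𝓝[>] 0) (𝓝 (ζ j + 0 * v j)) :=
        (Continuous.tendsto (by fun_prop) 0).mono_left nhdsWithin_le_nhds
      refine (hlim.eventually_const_lt ?_).mono fun t ht => ht.le
      simpa using h0
  obtain ⟨t, ht, htpos⟩ := (hev.and eventually_mem_nhdsWithin).exists
  exact ⟨t, htpos, fun j => by simpa using ht j⟩

/-! ### Uniqueness of the multiplier and dependences -/

/-- The multiplier is unique iff no nontrivial dependence among the active constraint derivatives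
is nonnegative on the weakly active constraints. -/
lemma multSet_eq_singleton_iff
    (hf : ContDiff ℝ 2 fun q : (Fin n → ℝ) × (Fin l → ℝ) => f q.1 q.2)
    (hg : ∀ i : Fin me, ContDiff ℝ 2 fun q : (Fin n → ℝ) × (Fin l → ℝ) => g q.1 q.2 i)
    (hh : ∀ j : Fin mi, ContDiff ℝ 2 fun q : (Fin n → ℝ) × (Fin l → ℝ) => h q.1 q.2 j)
    (hkkt : IsKKT f g h p x y z) :
    MultSet f g h p x = {(y, z)} ↔
      ∀ (u : Fin me → ℝ) (v : Fin mi → ℝ),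
        ∑ i, u i • fderiv ℝ (fun x' => g x' p i) x
          + ∑ j, v j • fderiv ℝ (fun x' => h x' p j) x = 0 →
        (∀ j, h x p j ≠ 0 → v j = 0) → (∀ j, z j = 0 → 0 ≤ v j) → u = 0 ∧ v = 0 := by
  obtain ⟨hst, hg0, hh0, hz, hcomp⟩ := id hkkt
  rw [complementarity_iff hh0 hz] at hcomp
  rw [fderiv_Lag f g h p x y z hf hg hh] at hst
  constructor
  · intro huniq u v hdep hinact hweak
    obtain ⟨t, ht, hzt⟩ := exists_pos_add_smul_nonneg hz hweak
    have hmem : (y + t • u, z + t • v) ∈ MultSet f g h p x := by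
      refine ⟨?_, hg0, hh0, hzt, ?_⟩
      · rw [fderiv_Lag f g h p x _ _ hf hg hh]
        have h2 := congrArg (t • ·) hdep
        simp only [smul_add, smul_zero, Finset.smul_sum, smul_smul] at h2
        simp only [Pi.add_apply, Pi.smul_apply, smul_eq_mul, add_smul, Finset.sum_add_distrib]
        rw [← add_zero (0 : (Fin n → ℝ) →L[ℝ] ℝ)]
        nth_rewrite 1 [← hst]
        rw [← h2]
        abel
      · rw [complementarity_iff hh0 hzt]
        intro j hj
        simp [hcomp j hj, hinact j hj]
    rw [huniq, Set.mem_singleton_iff, Prod.mk.injEq] at hmem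
    simpa [ht.ne'] using hmem
  · intro htriv
    refine Set.Subset.antisymm ?_ (Set.singleton_subset_iff.2 hkkt)
    rintro ⟨y', z'⟩ ⟨hst', -, -, hz', hcomp'⟩
    simp only at hst' hz' hcomp'
    rw [complementarity_iff hh0 hz'] at hcomp'
    rw [fderiv_Lag f g h p x y' z' hf hg hh] at hst'
    obtain ⟨hu, hv⟩ := htriv (y' - y) (z' - z) (by
        ext d
        have h1 := DFunLike.congr_fun hst d
        have h2 := DFunLike.congr_fun hst' d
        simp only [_root_.add_apply, _root_.sum_apply, _root_.smul_apply,
          _root_.zero_apply, smul_eq_mul] at h1 h2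
        simp only [_root_.add_apply, _root_.sum_apply, _root_.smul_apply,
          _root_.zero_apply, smul_eq_mul, Pi.sub_apply, sub_mul,
          Finset.sum_sub_distrib]
        linarith)
      (fun j hj => by simp [hcomp j hj, hcomp' j hj])
      (fun j hj => by simpa [hj] using hz' j)
    rw [sub_eq_zero] at hu hv
    simp [hu, hv]

/-- Extending coefficients by zero from a subtype does not change a linear combination. -/
lemma sum_extend_smul {ι E : Type*} [Fintype ι] [AddCommGroup E] [Module ℝ E] {P : ι → Prop}
    [Fintype {j // P j}] (c : {j // P j} → ℝ) (b : ι → E) :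
    ∑ j, Function.extend Subtype.val c 0 j • b j = ∑ k : {j // P j}, c k • b k := by
  refine (Fintype.sum_of_injective Subtype.val Subtype.val_injective _ _ ?_ ?_).symm
  · intro j hj
    rw [Function.extend_apply' _ _ _ (by simpa using hj)]
    simp
  · intro k
    rw [Subtype.val_injective.extend_apply]

lemma extend_subtype_of_not {ι : Type*} {P : ι → Prop} (c : {j // P j} → ℝ) {j : ι} (hj : ¬ P j) :
    Function.extend Subtype.val c 0 j = 0 := by
  rw [Function.extend_apply' _ _ _ (by rintro ⟨k, rfl⟩; exact hj k.2)]
  rfl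

/-- **Kyparisis.** At a KKT point, SMFCQ holds iff the multiplier
is unique. -/
theorem SMFCQ_iff_unique_multiplier
    (hf : ContDiff ℝ 2 fun q : (Fin n → ℝ) × (Fin l → ℝ) => f q.1 q.2)
    (hg : ∀ i : Fin me, ContDiff ℝ 2 fun q : (Fin n → ℝ) × (Fin l → ℝ) => g q.1 q.2 i)
    (hh : ∀ j : Fin mi, ContDiff ℝ 2 fun q : (Fin n → ℝ) × (Fin l → ℝ) => h q.1 q.2 j)
    (hkkt : IsKKT f g h p x y z) :
    SMFCQ g h p x z ↔ MultSet f g h p x = {(y, z)} := by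
  rw [multSet_eq_singleton_iff f g h p x y z hf hg hh hkkt]
  obtain ⟨-, -, hh0, hz, hcomp⟩ := hkkt
  rw [complementarity_iff hh0 hz] at hcomp
  let S := {j : Fin mi // h x p j = 0 ∧ 0 < z j}
  let W := {j : Fin mi // h x p j = 0 ∧ z j = 0}
  let a : Fin me → (Fin n → ℝ) →L[ℝ] ℝ := fun i => fderiv ℝ (fun x' => g x' p i) x
  let b : Fin mi → (Fin n → ℝ) →L[ℝ] ℝ := fun j => fderiv ℝ (fun x' => h x' p j) x
  let A : Fin me ⊕ S → (Fin n → ℝ) →L[ℝ] ℝ := Sum.elim a fun j => b j.1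
  have hLI : LinearIndependent ℝ
      (fun i : Fin me ⊕ S =>
        Sum.elim (fun i => gradx (fun x' => g x' p i) x)
          (fun j => gradx (fun x' => h x' p j.1) x) i) ↔ LinearIndependent ℝ A := by
    convert linearIndependent_gradx_iff
      (Sum.elim (fun i x' => g x' p i) (fun (j : S) x' => h x' p j.1)) x using 2
    all_goals
      ext i
      rcases i with i | i <;> rfl
  unfold SMFCQ
  rw [hLI]
  constructor
  · rintro ⟨hli, d, hdg, hds, hdw⟩ u v hdep hinact hweak
    -- Evaluating the dependence at `d` leaves a vanishing sum of nonpositive terms.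
    have hev : ∑ j, v j * b j d = 0 := by
      have := DFunLike.congr_fun hdep d
      simpa [_root_.sum_apply, hdg] using this
    have hterm : ∀ j ∈ Finset.univ, v j * b j d ≤ 0 := by
      intro j _
      by_cases hj : h x p j = 0
      · rcases (hz j).eq_or_lt with h0 | h0
        · exact mul_nonpos_of_nonneg_of_nonpos (hweak j h0.symm) (hdw j hj h0.symm).le
        · exact (mul_eq_zero_of_right _ (hds j hj h0)).le
      · simp [hinact j hj]
    have hvS : ∀ j, ¬ (h x p j = 0 ∧ 0 < z j) → v j = 0 := by
      intro j hj
      by_cases hact : h x p j = 0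
      · have hzj : z j = 0 := le_antisymm (not_lt.1 fun h0 => hj ⟨hact, h0⟩) (hz j)
        exact (mul_eq_zero.1 ((Finset.sum_eq_zero_iff_of_nonpos hterm).1 hev j
          (Finset.mem_univ j))).resolve_right (hdw j hact hzj).ne
      · exact hinact j hact
    have hsum : ∑ k : S, v k.1 • b k.1 = ∑ j, v j • b j :=
      Fintype.sum_of_injective Subtype.val Subtype.val_injective _ _
        (fun j hj => by rw [hvS j (by simpa using hj), zero_smul]) (fun _ => rfl)
    have hzero := Fintype.linearIndependent_iff.1 hli (Sum.elim u fun k => v k.1) (by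
      simp only [Fintype.sum_sum_type, Sum.elim_inl, Sum.elim_inr, A]
      rw [hsum]
      exact hdep)
    refine ⟨funext fun i => hzero (Sum.inl i), funext fun j => ?_⟩
    by_cases hj : h x p j = 0 ∧ 0 < z j
    · exact hzero (Sum.inr ⟨j, hj⟩)
    · exact hvS j hj
  · intro htriv
    have key : ∀ (c : Fin me ⊕ S → ℝ) (w : W → ℝ), 0 ≤ w →
        ∑ i, c i • A i + ∑ k, w k • b k.1 = 0 → c = 0 ∧ w = 0 := by
      intro c w hw hdep
      let vS : Fin mi → ℝ := Function.extend Subtype.val (fun k : S => c (Sum.inr k)) 0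
      let vW : Fin mi → ℝ := Function.extend Subtype.val w 0
      have hvS : ∀ k : S, vS k.1 = c (Sum.inr k) := Subtype.val_injective.extend_apply _ _
      have hvW : ∀ k : W, vW k.1 = w k := Subtype.val_injective.extend_apply _ _
      have hvS0 : ∀ j, ¬ (h x p j = 0 ∧ 0 < z j) → vS j = 0 := fun j hj =>
        extend_subtype_of_not _ hj
      have hvW0 : ∀ j, ¬ (h x p j = 0 ∧ z j = 0) → vW j = 0 := fun j hj =>
        extend_subtype_of_not _ hj
      obtain ⟨hu, hv⟩ := htriv (fun i => c (Sum.inl i)) (vS + vW) (by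
          simp only [Pi.add_apply, add_smul, Finset.sum_add_distrib]
          have h1 : ∑ j, vS j • b j = ∑ k : S, c (Sum.inr k) • b k.1 := sum_extend_smul _ _
          have h2 : ∑ j, vW j • b j = ∑ k : W, w k • b k.1 := sum_extend_smul _ _
          rw [Fintype.sum_sum_type] at hdep
          rw [← add_assoc]
          change ∑ i, c (Sum.inl i) • a i + ∑ j, vS j • b j + ∑ j, vW j • b j = 0
          rw [h1, h2]
          exact hdep)
        (fun j hj => by simp [hvS0 j (fun h' => hj h'.1), hvW0 j (fun h' => hj h'.1)])
        (fun j hj => by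
          rw [Pi.add_apply, hvS0 j (fun h' => h'.2.ne' hj), zero_add]
          by_cases hact : h x p j = 0
          · exact (hw ⟨j, hact, hj⟩).trans_eq (hvW ⟨j, hact, hj⟩).symm
          · exact (hvW0 j fun h' => hact h'.1).ge)
      constructor
      · funext i
        rcases i with i | k
        · exact congrFun hu i
        · have := congrFun hv k.1
          rw [Pi.add_apply, hvW0 k.1 (fun h' => k.2.2.ne' h'.2), add_zero, hvS] at this
          exact this
      · funext k
        have := congrFun hv k.1
        rw [Pi.add_apply, hvS0 k.1 (fun h' => h'.2.ne' k.2.2), zero_add, hvW] at this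
        exact this
    constructor
    · rw [Fintype.linearIndependent_iff]
      intro c hc
      exact congrFun (key c 0 le_rfl (by simpa using hc)).1
    · by_contra hd
      obtain ⟨c, w, hw, hwne, hdep⟩ := exists_dependence
        (fun i => (A i : (Fin n → ℝ) →ₗ[ℝ] ℝ)) (fun k : W => (b k.1 : (Fin n → ℝ) →ₗ[ℝ] ℝ)) (by
          rintro ⟨d, hdA, hdW⟩
          exact hd ⟨d, fun i => hdA (Sum.inl i), fun j h1 h2 => hdA (Sum.inr ⟨j, h1, h2⟩),
            fun j h1 h2 => hdW ⟨j, h1, h2⟩⟩)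
      refine hwne (key c w hw ?_).2
      apply ContinuousLinearMap.coe_injective
      simpa using hdep

end SensNLP
end

section
/- (Fiacco) Suppose (x*, y*, z*) is a KKT point of NLP(p*) at which SOSC, LICQ and SCS hold. Let z*_I denote the subvector of multipliers for active inequalities. Then: (1) the primal-dual solution (x*, y*, z*) is unique (M_{p*}(x*) = {(y*, z*)} and x* is the unique local minimizer nearby); (2) there exists a neighborhood U of p* and a unique continuously differentiable function w(p) = (x(p), y(p), z_I(p)) on U with w(p*) = (x*, y*, z*_I), such that (x(p), y(p), z(p)) (with inactive multipliers set to zero) is a KKT point of NLP(p), and its Jacobian satisfies M · J_p w(p) = −N, where M is the block matrix with rows [∇²_{xx}L, (J_x g)ᵀ, (J_x h_I)ᵀ], [J_x g, 0, 0], [J_x h_I, 0, 0] and N is the block column [∇²_{xp}L; J_p g; J_p h_I], all evaluated at (x(p), y(p), z(p), p) and with h_I the active inequality constraints; (3) SCS and LICQ continue to hold at (x(p), y(p), z(p)) for all p ∈ U. -/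
/-!
The proof follows the implicit function theorem for the KKT system.

Fix the active set `I` at the reference point. The map `kktSys f g h I` collects `∇ₓL`, the equality
constraints, `h j` for `j ∈ I`, and `z j` for `j ∉ I`; it is a square C¹ system in `(x, y, z)` with
parameter `p`. Its derivative in `(x, y, z)` is injective (`kkt_matrix_injective`): a kernel vector
`(dx, dy, dz)` has `dx` in the critical cone with zero curvature, so SOSC forces `dx = 0`, and LICQ
then forces `dy = 0`, `dz = 0`. In finite dimension injectivity is invertibility
(`kktSys_isInvertible`), so the zeros near the reference point form the graph of a C¹ map `ψ`
(`exists_implicit`). On a small ball around `p*` the inactive constraints stay negative and the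
active multipliers stay positive (this is where SCS enters), so `ψ p` is a KKT point with active set
`I`, and LICQ persists because linear independence is an open condition (`LICQ.eventually`).
Differentiating `kktSys (p, ψ p) = 0` gives the Jacobian equation (`jacobian_rows`, through the total
derivative formula `fderiv_gradLag`).

The competitor in the uniqueness clause is only known to pass through the reference point, so
uniqueness is propagated over the whole ball: near any point of agreement the active multipliers of
the competitor are positive, complementarity puts it in the zero set of `kktSys`, and local
uniqueness of `ψ` applies; agreement is thus open, it is closed by continuity, and the ball is
connected (`eqOn_of_locally_unique`).

Uniqueness of the multiplier is LICQ (`multSet_eq`). Strict local minimality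
(`strict_local_min`) is the usual contradiction argument with a limit direction of a sequence of
better feasible points.
-/

open Filter Topology Set Matrix

attribute [local instance] Classical.propDecidable

namespace SensNLP

variable {n l me mi : ℕ}
variable (f : (Fin n → ℝ) → (Fin l → ℝ) → ℝ)
  (g : (Fin n → ℝ) → (Fin l → ℝ) → Fin me → ℝ)
  (h : (Fin n → ℝ) → (Fin l → ℝ) → Fin mi → ℝ)
  (p : Fin l → ℝ) (x : Fin n → ℝ) (y : Fin me → ℝ) (z : Fin mi → ℝ)
  (hdir : Fin l → ℝ)

/-! ### Derivatives of the Lagrangian and of its gradient -/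

theorem lag_contDiff
    (hf : ContDiff ℝ 2 fun q : (Fin n → ℝ) × (Fin l → ℝ) => f q.1 q.2)
    (hg : ∀ i : Fin me, ContDiff ℝ 2 fun q : (Fin n → ℝ) × (Fin l → ℝ) => g q.1 q.2 i)
    (hh : ∀ j : Fin mi, ContDiff ℝ 2 fun q : (Fin n → ℝ) × (Fin l → ℝ) => h q.1 q.2 j) :
    ContDiff ℝ 2 fun w : (Fin l → ℝ) × (Fin n → ℝ) × (Fin me → ℝ) × (Fin mi → ℝ) =>
      Lag f g h w.1 w.2.1 w.2.2.1 w.2.2.2 := by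
  have hs : ContDiff ℝ 2 fun w : (Fin l → ℝ) × (Fin n → ℝ) × (Fin me → ℝ) × (Fin mi → ℝ) =>
      (w.2.1, w.1) := by fun_prop
  unfold Lag
  refine ((hf.comp hs).add (ContDiff.sum fun i _ => ContDiff.mul ?_ ((hg i).comp hs))).add
    (ContDiff.sum fun j _ => ContDiff.mul ?_ ((hh j).comp hs)) <;> fun_prop

/-- Each component of `∇ₓL` is jointly C¹ in `(p, x, y, z)`. -/
theorem gradLag_contDiff
    (hf : ContDiff ℝ 2 fun q : (Fin n → ℝ) × (Fin l → ℝ) => f q.1 q.2)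
    (hg : ∀ i : Fin me, ContDiff ℝ 2 fun q : (Fin n → ℝ) × (Fin l → ℝ) => g q.1 q.2 i)
    (hh : ∀ j : Fin mi, ContDiff ℝ 2 fun q : (Fin n → ℝ) × (Fin l → ℝ) => h q.1 q.2 j)
    (v : Fin n → ℝ) :
    ContDiff ℝ 1 fun w : (Fin l → ℝ) × (Fin n → ℝ) × (Fin me → ℝ) × (Fin mi → ℝ) =>
      fderiv ℝ (fun x' => Lag f g h w.1 x' w.2.2.1 w.2.2.2) w.2.1 v := by
  refine ContDiff.fderiv_apply (m := 2) (n := 1)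
    (f := fun w : (Fin l → ℝ) × (Fin n → ℝ) × (Fin me → ℝ) × (Fin mi → ℝ) =>
      fun x' => Lag f g h w.1 x' w.2.2.1 w.2.2.2) ?_ (by fun_prop) contDiff_const (by norm_num)
  have hs : ContDiff ℝ 2 fun u : ((Fin l → ℝ) × (Fin n → ℝ) × (Fin me → ℝ) × (Fin mi → ℝ)) ×
      (Fin n → ℝ) => (u.1.1, u.2, u.1.2.2.1, u.1.2.2.2) := by fun_prop
  exact (lag_contDiff f g h hf hg hh).comp hs

/-- The partial function `x ↦ φ(x,p)` of a jointly smooth function is smooth. -/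
theorem contDiff_left {k : WithTop ℕ∞} {φ : (Fin n → ℝ) → (Fin l → ℝ) → ℝ}
    (hφ : ContDiff ℝ k fun q : (Fin n → ℝ) × (Fin l → ℝ) => φ q.1 q.2) (p : Fin l → ℝ) :
    ContDiff ℝ k fun x => φ x p :=
  hφ.comp (contDiff_id.prodMk contDiff_const)

/-- `∇ₓL` is affine in the multipliers, with the constraint gradients as coefficients. -/
theorem fderiv_lag
    (hf : ContDiff ℝ 2 fun q : (Fin n → ℝ) × (Fin l → ℝ) => f q.1 q.2)
    (hg : ∀ i : Fin me, ContDiff ℝ 2 fun q : (Fin n → ℝ) × (Fin l → ℝ) => g q.1 q.2 i)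
    (hh : ∀ j : Fin mi, ContDiff ℝ 2 fun q : (Fin n → ℝ) × (Fin l → ℝ) => h q.1 q.2 j)
    (p : Fin l → ℝ) (x : Fin n → ℝ) (y : Fin me → ℝ) (z : Fin mi → ℝ) (v : Fin n → ℝ) :
    fderiv ℝ (fun x' => Lag f g h p x' y z) x v =
      fderiv ℝ (fun x' => f x' p) x v + ∑ i, y i * fderiv ℝ (fun x' => g x' p i) x v
        + ∑ j, z j * fderiv ℝ (fun x' => h x' p j) x v := by
  have h1 : HasFDerivAt (fun x' => f x' p) _ x :=
    ((contDiff_left hf p).differentiable two_ne_zero x).hasFDerivAt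
  have h2 : ∀ i, HasFDerivAt (fun x' => g x' p i) _ x := fun i =>
    ((contDiff_left (φ := fun x p => g x p i) (hg i) p).differentiable two_ne_zero x).hasFDerivAt
  have h3 : ∀ j, HasFDerivAt (fun x' => h x' p j) _ x := fun j =>
    ((contDiff_left (φ := fun x p => h x p j) (hh j) p).differentiable two_ne_zero x).hasFDerivAt
  have := (h1.add (HasFDerivAt.fun_sum (u := Finset.univ) fun i _ => (h2 i).const_mul (y i))).add
    (HasFDerivAt.fun_sum (u := Finset.univ) fun j _ => (h3 j).const_mul (z j))
  have e : fderiv ℝ (fun x' => Lag f g h p x' y z) x = _ := HasFDerivAt.fderiv this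
  rw [e]
  simp

/-- Total derivative of `a ↦ ψ(X(a), P(a))` as the sum of the two partial derivatives. -/
theorem fderiv_comp_two {A : Type*} [NormedAddCommGroup A] [NormedSpace ℝ A]
    {ψ : (Fin n → ℝ) → (Fin l → ℝ) → ℝ}
    (hψ : Differentiable ℝ fun q : (Fin n → ℝ) × (Fin l → ℝ) => ψ q.1 q.2)
    {X : A → Fin n → ℝ} {P : A → Fin l → ℝ} {a : A}
    (hX : DifferentiableAt ℝ X a) (hP : DifferentiableAt ℝ P a) (q : A) :
    fderiv ℝ (fun a => ψ (X a) (P a)) a q =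
      fderiv ℝ (fun x' => ψ x' (P a)) (X a) (fderiv ℝ X a q)
        + fderiv ℝ (fun p' => ψ (X a) p') (P a) (fderiv ℝ P a q) := by
  have hD := (hψ (X a, P a)).hasFDerivAt
  have e1 : HasFDerivAt (fun a => ψ (X a) (P a)) _ a :=
    HasFDerivAt.comp (f := fun a => (X a, P a)) a hD (hX.hasFDerivAt.prodMk hP.hasFDerivAt)
  have e2 : HasFDerivAt (fun x' => ψ x' (P a)) _ (X a) :=
    HasFDerivAt.comp (f := fun x' => (x', P a)) (X a) hD
      ((hasFDerivAt_id (X a)).prodMk (hasFDerivAt_const (P a) (X a)))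
  have e3 : HasFDerivAt (fun p' => ψ (X a) p') _ (P a) :=
    HasFDerivAt.comp (f := fun p' => (X a, p')) (P a) hD
      ((hasFDerivAt_const (X a) (P a)).prodMk (hasFDerivAt_id (P a)))
  rw [e1.fderiv, e2.fderiv, e3.fderiv]
  simp [← map_add]

/-- Total derivative of the `v`-component of `∇ₓL` along differentiable maps
`X, Y, Z, P`. The multiplier part is explicit since `∇ₓL` is affine in `(y,z)`. -/
theorem fderiv_gradLag
    (hf : ContDiff ℝ 2 fun q : (Fin n → ℝ) × (Fin l → ℝ) => f q.1 q.2)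
    (hg : ∀ i : Fin me, ContDiff ℝ 2 fun q : (Fin n → ℝ) × (Fin l → ℝ) => g q.1 q.2 i)
    (hh : ∀ j : Fin mi, ContDiff ℝ 2 fun q : (Fin n → ℝ) × (Fin l → ℝ) => h q.1 q.2 j)
    {A : Type*} [NormedAddCommGroup A] [NormedSpace ℝ A]
    {X : A → Fin n → ℝ} {Y : A → Fin me → ℝ} {Z : A → Fin mi → ℝ} {P : A → Fin l → ℝ} {a : A}
    (hX : DifferentiableAt ℝ X a) (hY : DifferentiableAt ℝ Y a)
    (hZ : DifferentiableAt ℝ Z a) (hP : DifferentiableAt ℝ P a) (q : A) (v : Fin n → ℝ) :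
    fderiv ℝ (fun a => fderiv ℝ (fun x' => Lag f g h (P a) x' (Y a) (Z a)) (X a) v) a q =
      fderiv ℝ (fun x' => fderiv ℝ (fun x'' => Lag f g h (P a) x'' (Y a) (Z a)) x' v)
          (X a) (fderiv ℝ X a q)
        + (∑ i, fderiv ℝ Y a q i * fderiv ℝ (fun x' => g x' (P a) i) (X a) v)
        + (∑ j, fderiv ℝ Z a q j * fderiv ℝ (fun x' => h x' (P a) j) (X a) v)
        + fderiv ℝ (fun p' => fderiv ℝ (fun x'' => Lag f g h p' x'' (Y a) (Z a)) (X a) v)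
          (P a) (fderiv ℝ P a q) := by
  have hD := ((gradLag_contDiff f g h hf hg hh v).differentiable (by norm_num)
    (P a, X a, Y a, Z a)).hasFDerivAt
  set G := fun w : (Fin l → ℝ) × (Fin n → ℝ) × (Fin me → ℝ) × (Fin mi → ℝ) =>
      fderiv ℝ (fun x' => Lag f g h w.1 x' w.2.2.1 w.2.2.2) w.2.1 v with hG
  have e1 : HasFDerivAt (fun a => G (P a, X a, Y a, Z a)) _ a :=
    HasFDerivAt.comp (f := fun a => (P a, X a, Y a, Z a)) a hD
      (hP.hasFDerivAt.prodMk (hX.hasFDerivAt.prodMk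
      (hY.hasFDerivAt.prodMk hZ.hasFDerivAt)))
  have e2 : HasFDerivAt (fun x' => G (P a, x', Y a, Z a)) _ (X a) :=
    HasFDerivAt.comp (f := fun x' => (P a, x', Y a, Z a)) (X a) hD
      ((hasFDerivAt_const (P a) (X a)).prodMk ((hasFDerivAt_id (X a)).prodMk
      (hasFDerivAt_const (Y a, Z a) (X a))))
  have e3 : HasFDerivAt (fun p' => G (p', X a, Y a, Z a)) _ (P a) :=
    HasFDerivAt.comp (f := fun p' => (p', X a, Y a, Z a)) (P a) hD
      ((hasFDerivAt_id (P a)).prodMk (hasFDerivAt_const (X a, Y a, Z a) (P a)))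
  have e4 : HasFDerivAt (fun t => G (P a, X a, t)) _ (Y a, Z a) :=
    HasFDerivAt.comp (f := fun t => (P a, X a, t)) (Y a, Z a) hD
      ((hasFDerivAt_const (P a) (Y a, Z a)).prodMk
      ((hasFDerivAt_const (X a) (Y a, Z a)).prodMk (hasFDerivAt_id (Y a, Z a))))
  have hy : ∀ i, HasFDerivAt (fun t : (Fin me → ℝ) × (Fin mi → ℝ) => t.1 i)
      ((ContinuousLinearMap.proj (R := ℝ) i).comp
        (ContinuousLinearMap.fst ℝ (Fin me → ℝ) (Fin mi → ℝ))) (Y a, Z a) :=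
    fun i => ((ContinuousLinearMap.proj (R := ℝ) i).comp
      (ContinuousLinearMap.fst ℝ (Fin me → ℝ) (Fin mi → ℝ))).hasFDerivAt
  have hz : ∀ j, HasFDerivAt (fun t : (Fin me → ℝ) × (Fin mi → ℝ) => t.2 j)
      ((ContinuousLinearMap.proj (R := ℝ) j).comp
        (ContinuousLinearMap.snd ℝ (Fin me → ℝ) (Fin mi → ℝ))) (Y a, Z a) :=
    fun j => ((ContinuousLinearMap.proj (R := ℝ) j).comp
      (ContinuousLinearMap.snd ℝ (Fin me → ℝ) (Fin mi → ℝ))).hasFDerivAt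
  have e5 := ((hasFDerivAt_const (fderiv ℝ (fun x' => f x' (P a)) (X a) v) (Y a, Z a)).add
      (HasFDerivAt.fun_sum (u := Finset.univ) fun i _ =>
        (hy i).mul_const (fderiv ℝ (fun x' => g x' (P a) i) (X a) v))).add
      (HasFDerivAt.fun_sum (u := Finset.univ) fun j _ =>
        (hz j).mul_const (fderiv ℝ (fun x' => h x' (P a) j) (X a) v))
  have hGe : (fun t : (Fin me → ℝ) × (Fin mi → ℝ) => G (P a, X a, t)) = fun t =>
      fderiv ℝ (fun x' => f x' (P a)) (X a) v
        + ∑ i, t.1 i * fderiv ℝ (fun x' => g x' (P a) i) (X a) v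
        + ∑ j, t.2 j * fderiv ℝ (fun x' => h x' (P a) j) (X a) v :=
    funext fun t => fderiv_lag f g h hf hg hh (P a) (X a) t.1 t.2 v
  rw [hGe] at e4
  -- the derivative in `(y,z)` is computed twice, abstractly (`e4`) and explicitly (`e5`)
  have e6 := congrArg (fun T => T (fderiv ℝ Y a q, fderiv ℝ Z a q)) (e4.unique e5)
  simp only [ContinuousLinearMap.comp_apply, ContinuousLinearMap.prod_apply,
    _root_.zero_apply, ContinuousLinearMap.id_apply, _root_.add_apply,
    _root_.sum_apply, _root_.smul_apply, smul_eq_mul,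
    ContinuousLinearMap.coe_fst', ContinuousLinearMap.coe_snd', ContinuousLinearMap.proj_apply,
    zero_add] at e6
  change fderiv ℝ (fun a => G (P a, X a, Y a, Z a)) a q =
    fderiv ℝ (fun x' => G (P a, x', Y a, Z a)) (X a) (fderiv ℝ X a q) + _ + _ +
    fderiv ℝ (fun p' => G (p', X a, Y a, Z a)) (P a) (fderiv ℝ P a q)
  rw [e1.fderiv, e2.fderiv, e3.fderiv, add_assoc (fderiv ℝ G _ |>.comp _ _)]
  simp only [mul_comm (fderiv ℝ Y a q _), mul_comm (fderiv ℝ Z a q _)]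
  rw [← e6]
  simp [← map_add]

/-! ### LICQ, complementarity and uniqueness of the multiplier -/

theorem sum_subtype_eq {ι : Type*} [Fintype ι] {p : ι → Prop} [Fintype {j // p j}] (F : ι → ℝ)
    (hF : ∀ j, ¬ p j → F j = 0) : ∑ j : {j // p j}, F j = ∑ j, F j := by
  rw [← Finset.sum_subtype (Finset.univ.filter p) (by simp) F]
  exact Finset.sum_filter_of_ne fun j _ hj => by_contra fun hp => hj (hF j hp)

/-- LICQ in terms of linear functionals: a vanishing combination of active constraint
derivatives is trivial. -/
theorem LICQ.eq_zero {g : (Fin n → ℝ) → (Fin l → ℝ) → Fin me → ℝ}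
    {h : (Fin n → ℝ) → (Fin l → ℝ) → Fin mi → ℝ} {p : Fin l → ℝ} {x : Fin n → ℝ}
    (hl : LICQ g h p x) (a : Fin me → ℝ) (b : Fin mi → ℝ) (hb : ∀ j, h x p j ≠ 0 → b j = 0)
    (hab : ∀ k : Fin n, (∑ i, a i * fderiv ℝ (fun x' => g x' p i) x (Pi.single k 1))
      + ∑ j, b j * fderiv ℝ (fun x' => h x' p j) x (Pi.single k 1) = 0) :
    a = 0 ∧ b = 0 := by
  have := Fintype.linearIndependent_iff.1 hl
    (Sum.elim a fun j : {j : Fin mi // h x p j = 0} => b j.1) (by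
      ext k
      simp only [Fintype.sum_sum_type, Sum.elim_inl, Sum.elim_inr,
        Finset.sum_apply, Pi.smul_apply, smul_eq_mul, gradx, Pi.zero_apply]
      rw [sum_subtype_eq (fun j => b j * fderiv ℝ (fun x' => h x' p j) x (Pi.single k 1))
        fun j hj => by rw [hb j hj, zero_mul]]
      exact hab k)
  refine ⟨funext fun i => this (Sum.inl i), funext fun j => ?_⟩
  by_cases hj : h x p j = 0
  · exact this (Sum.inr ⟨j, hj⟩)
  · exact hb j hj

theorem IsKKT.compl {f : (Fin n → ℝ) → (Fin l → ℝ) → ℝ}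
    {g : (Fin n → ℝ) → (Fin l → ℝ) → Fin me → ℝ}
    {h : (Fin n → ℝ) → (Fin l → ℝ) → Fin mi → ℝ} {p : Fin l → ℝ} {x : Fin n → ℝ}
    {y : Fin me → ℝ} {z : Fin mi → ℝ} (hk : IsKKT f g h p x y z) (j : Fin mi) :
    z j * h x p j = 0 :=
  (Finset.sum_eq_zero_iff_of_nonpos fun j _ =>
    mul_nonpos_of_nonneg_of_nonpos (hk.2.2.2.1 j) (hk.2.2.1 j)).1 hk.2.2.2.2 j (Finset.mem_univ j)

/-- Under LICQ the multiplier is unique: the difference of two multipliers vanishes on inactive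
indices and annihilates the active gradients. -/
theorem multSet_eq
    (hf : ContDiff ℝ 2 fun q : (Fin n → ℝ) × (Fin l → ℝ) => f q.1 q.2)
    (hg : ∀ i : Fin me, ContDiff ℝ 2 fun q : (Fin n → ℝ) × (Fin l → ℝ) => g q.1 q.2 i)
    (hh : ∀ j : Fin mi, ContDiff ℝ 2 fun q : (Fin n → ℝ) × (Fin l → ℝ) => h q.1 q.2 j)
    {p : Fin l → ℝ} {x : Fin n → ℝ} {y : Fin me → ℝ} {z : Fin mi → ℝ}
    (hk : IsKKT f g h p x y z) (hl : LICQ g h p x) : MultSet f g h p x = {(y, z)} := by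
  refine Set.eq_singleton_iff_unique_mem.2 ⟨hk, ?_⟩
  rintro ⟨y', z'⟩ (hk' : IsKKT f g h p x y' z')
  have := hl.eq_zero (y' - y) (z' - z) (fun j hj => by
      have h1 := (mul_eq_zero.1 (hk.compl j)).resolve_right hj
      have h2 := (mul_eq_zero.1 (hk'.compl j)).resolve_right hj
      simp [h1, h2]) (fun k => by
      have h1 := congrArg (fun T => T (Pi.single k 1)) hk.1
      have h2 := congrArg (fun T => T (Pi.single k 1)) hk'.1
      simp only [fderiv_lag f g h hf hg hh, _root_.zero_apply] at h1 h2
      simp only [Pi.sub_apply, sub_mul, Finset.sum_sub_distrib]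
      linarith)
  rw [Prod.mk.injEq]
  exact ⟨sub_eq_zero.1 this.1, sub_eq_zero.1 this.2⟩

/-! ### Second-order sufficiency -/

/-- Second-order necessary inequality along a sequence `xs + v k → xs` on which `φ` does not exceed
its value at a critical point `xs`: the Hessian is nonpositive in the limit direction `d`. -/
theorem hessQ_nonpos_of_seq {φ : (Fin n → ℝ) → ℝ} (hφ : ContDiff ℝ 2 φ) {xs : Fin n → ℝ}
    (h0 : fderiv ℝ φ xs = 0) {v : ℕ → Fin n → ℝ} (hv : Tendsto v atTop (𝓝 0))
    (hle : ∀ k, φ (xs + v k) ≤ φ xs) {d : Fin n → ℝ}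
    (hd : Tendsto (fun k => ‖v k‖⁻¹ • v k) atTop (𝓝 d)) : hessQ φ xs d ≤ 0 := by
  have hdiff : Differentiable ℝ φ := hφ.differentiable two_ne_zero
  have hdiff2 : Differentiable ℝ (fderiv ℝ φ) :=
    (hφ.fderiv_right (m := 1) (by norm_num)).differentiable one_ne_zero
  -- mean value theorem on the segment from `xs` to `xs + v k`
  have hmv : ∀ k, ∃ θ ∈ Ioo (0 : ℝ) 1, fderiv ℝ φ (xs + θ • v k) (v k) ≤ 0 := by
    intro k
    have hder : ∀ t : ℝ, HasDerivAt (fun t : ℝ => φ (xs + t • v k))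
        (fderiv ℝ φ (xs + t • v k) (v k)) t := by
      intro t
      have h1 : HasDerivAt (fun t : ℝ => xs + t • v k) (v k) t := by
        simpa using ((hasDerivAt_id t).smul_const (v k)).const_add xs
      exact (hdiff _).hasFDerivAt.comp_hasDerivAt t h1
    obtain ⟨θ, hθ, e⟩ := exists_hasDerivAt_eq_slope (fun t : ℝ => φ (xs + t • v k))
      (fun t => fderiv ℝ φ (xs + t • v k) (v k)) zero_lt_one
      (fun t _ => (hder t).continuousAt.continuousWithinAt) (fun t _ => hder t)
    refine ⟨θ, hθ, ?_⟩
    rw [e]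
    simpa using hle k
  choose θ hθ hθle using hmv
  -- differentiate `∇φ` at `xs` along `θ k • v k`, rescaled so that the direction tends to `d`
  have hlim := ((hdiff2 xs).hasFDerivAt.hasFDerivWithinAt (s := univ)).lim (l := atTop)
    (c := fun k => (θ k)⁻¹ * ‖v k‖⁻¹) (d := fun k => θ k • v k) (v := d) (by
      refine squeeze_zero_norm (fun k => ?_) (tendsto_zero_iff_norm_tendsto_zero.1 hv)
      rw [norm_smul, Real.norm_of_nonneg (hθ k).1.le]
      exact mul_le_of_le_one_left (norm_nonneg _) (hθ k).2.le) (by simp) (by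
      refine hd.congr fun k => ?_
      have := (hθ k).1.ne'
      rw [smul_smul]
      congr 1
      field_simp)
  have hlim2 := (isBoundedBilinearMap_apply.continuous.tendsto
    (fderiv ℝ (fderiv ℝ φ) xs d, d)).comp (hlim.prodMk_nhds hd)
  have hH : hessQ φ xs d = fderiv ℝ (fderiv ℝ φ) xs d d := by
    unfold hessQ
    rw [fderiv_clm_apply (hdiff2 xs) (differentiableAt_const d)]
    simp
  rw [hH]
  refine le_of_tendsto hlim2 (Eventually.of_forall fun k => ?_)
  have h1 : 0 ≤ (θ k)⁻¹ * ‖v k‖⁻¹ := by have := (hθ k).1; positivity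
  have h2 : 0 ≤ ‖v k‖⁻¹ := by positivity
  simp only [Function.comp_apply, h0, sub_zero, _root_.smul_apply, map_smul, smul_eq_mul]
  exact mul_nonpos_of_nonneg_of_nonpos h2 (mul_nonpos_of_nonneg_of_nonpos h1 (hθle k))

/-- Along a sequence `xs + v k → xs` with limit direction `d`, a differentiable function that does
not exceed its value at `xs` has nonpositive derivative in direction `d`. -/
theorem fderiv_nonpos_of_seq {φ : (Fin n → ℝ) → ℝ} {xs : Fin n → ℝ}
    (hφ : DifferentiableAt ℝ φ xs) {v : ℕ → Fin n → ℝ} (hv : Tendsto v atTop (𝓝 0))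
    (hle : ∀ k, φ (xs + v k) ≤ φ xs) {d : Fin n → ℝ}
    (hd : Tendsto (fun k => ‖v k‖⁻¹ • v k) atTop (𝓝 d)) : fderiv ℝ φ xs d ≤ 0 := by
  have hlim := (hφ.hasFDerivAt.hasFDerivWithinAt (s := univ)).lim hv (by simp) hd
  refine le_of_tendsto hlim (Eventually.of_forall fun k => ?_)
  exact mul_nonpos_of_nonneg_of_nonpos (by positivity) (sub_nonpos.2 (hle k))

/-- Second-order sufficiency: a KKT point at which the Hessian of the Lagrangian is positive on
the critical cone is a strict local minimizer. -/
theorem strict_local_min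
    (hf : ContDiff ℝ 2 fun q : (Fin n → ℝ) × (Fin l → ℝ) => f q.1 q.2)
    (hg : ∀ i : Fin me, ContDiff ℝ 2 fun q : (Fin n → ℝ) × (Fin l → ℝ) => g q.1 q.2 i)
    (hh : ∀ j : Fin mi, ContDiff ℝ 2 fun q : (Fin n → ℝ) × (Fin l → ℝ) => h q.1 q.2 j)
    {p : Fin l → ℝ} {x : Fin n → ℝ} {y : Fin me → ℝ} {z : Fin mi → ℝ}
    (hk : IsKKT f g h p x y z)
    (hpos : ∀ d ∈ criticalCone f g h p x, d ≠ 0 →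
      0 < hessQ (fun x' => Lag f g h p x' y z) x d) :
    ∃ V ∈ 𝓝 x, ∀ x' ∈ V, g x' p = 0 → h x' p ≤ 0 → x' ≠ x → f x p < f x' p := by
  by_contra hcon
  have hfreq : ∃ᶠ x' in 𝓝 x, g x' p = 0 ∧ h x' p ≤ 0 ∧ x' ≠ x ∧ f x' p ≤ f x p := by
    intro hev
    refine hcon ⟨_, hev, fun x' hx' h1 h2 h3 => ?_⟩
    by_contra h4
    exact hx' ⟨h1, h2, h3, not_lt.1 h4⟩
  obtain ⟨s, hs, hsp⟩ := exists_seq_forall_of_frequently hfreq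
  have hne : ∀ k, s k - x ≠ 0 := fun k => sub_ne_zero.2 (hsp k).2.2.1
  -- normalized displacements have a limit direction `d`, which lies in the critical cone
  obtain ⟨d, hd, σ, hσ, hlim⟩ := (isCompact_sphere (0 : Fin n → ℝ) 1).tendsto_subseq
    (x := fun k => ‖s k - x‖⁻¹ • (s k - x)) (fun k => by
      simp [norm_smul, norm_ne_zero_iff.2 (hne k)])
  have hd0 : d ≠ 0 := by rintro rfl; simp at hd
  set v : ℕ → Fin n → ℝ := fun k => s (σ k) - x with hvdef
  have hxv : ∀ k, x + v k = s (σ k) := fun k => by simp [hvdef]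
  have hv : Tendsto v atTop (𝓝 0) := by
    simpa using (hs.comp hσ.tendsto_atTop).sub_const x
  have hfd : DifferentiableAt ℝ (fun x' => f x' p) x :=
    (contDiff_left hf p).differentiable two_ne_zero x
  have hgd : ∀ i, DifferentiableAt ℝ (fun x' => g x' p i) x := fun i =>
    (contDiff_left (φ := fun x p => g x p i) (hg i) p).differentiable two_ne_zero x
  have hhd : ∀ j, DifferentiableAt ℝ (fun x' => h x' p j) x := fun j =>
    (contDiff_left (φ := fun x p => h x p j) (hh j) p).differentiable two_ne_zero x
  have hgv : ∀ k i, g (x + v k) p i = 0 := fun k i => by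
    rw [hxv]; exact congrFun (hsp _).1 i
  have hg0 : ∀ i, g x p i = 0 := fun i => congrFun hk.2.1 i
  have hcone : d ∈ criticalCone f g h p x := by
    refine ⟨fderiv_nonpos_of_seq hfd hv (fun k => ?_) hlim, fun i => le_antisymm
      (fderiv_nonpos_of_seq (hgd i) hv (fun k => ?_) hlim) ?_, fun j hj =>
      fderiv_nonpos_of_seq (hhd j) hv (fun k => ?_) hlim⟩
    · rw [hxv]; exact (hsp _).2.2.2
    · rw [hgv, hg0]
    · have := fderiv_nonpos_of_seq (φ := fun x' => -g x' p i) (hgd i).neg hv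
        (fun k => by rw [hgv, hg0]) hlim
      rw [fderiv_fun_neg] at this
      simpa using this
    · rw [hxv, hj]; exact (hsp _).2.1 j
  refine absurd (hpos d hcone hd0) (not_lt.2 ?_)
  have hL : ContDiff ℝ 2 (fun x' => Lag f g h p x' y z) := by
    have hc : ContDiff ℝ 2 fun x' : Fin n → ℝ => (p, x', y, z) := by fun_prop
    exact (lag_contDiff f g h hf hg hh).comp hc
  refine hessQ_nonpos_of_seq hL hk.1 hv (fun k => ?_) hlim
  have h1 : Lag f g h p x y z = f x p := by
    simp [Lag, hg0, hk.compl]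
  have h2 : ∑ j, z j * h (x + v k) p j ≤ 0 := Finset.sum_nonpos fun j _ =>
    mul_nonpos_of_nonneg_of_nonpos (hk.2.2.2.1 j) (by rw [hxv]; exact (hsp _).2.1 j)
  have h3 : f (x + v k) p ≤ f x p := by rw [hxv]; exact (hsp _).2.2.2
  rw [h1]
  simp only [Lag, hgv, mul_zero, Finset.sum_const_zero]
  linarith

/-! ### The square KKT system and its nonsingularity -/

/-- The square KKT system in the unknowns `(x,y,z)` with parameter `p`: stationarity, the equality
constraints, and for each inequality index either `h j = 0` (if `j ∈ I`) or `z j = 0`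
(if `j ∉ I`). Keeping the inactive multipliers as unknowns avoids a subtype-indexed space. -/
noncomputable def kktSys (I : Set (Fin mi))
    (w : (Fin l → ℝ) × (Fin n → ℝ) × (Fin me → ℝ) × (Fin mi → ℝ)) :
    (Fin n → ℝ) × (Fin me → ℝ) × (Fin mi → ℝ) :=
  (fun k => fderiv ℝ (fun x' => Lag f g h w.1 x' w.2.2.1 w.2.2.2) w.2.1 (Pi.single k 1),
    fun i => g w.2.1 w.1 i, fun j => if j ∈ I then h w.2.1 w.1 j else w.2.2.2 j)

theorem kktSys_contDiff
    (hf : ContDiff ℝ 2 fun q : (Fin n → ℝ) × (Fin l → ℝ) => f q.1 q.2)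
    (hg : ∀ i : Fin me, ContDiff ℝ 2 fun q : (Fin n → ℝ) × (Fin l → ℝ) => g q.1 q.2 i)
    (hh : ∀ j : Fin mi, ContDiff ℝ 2 fun q : (Fin n → ℝ) × (Fin l → ℝ) => h q.1 q.2 j)
    (I : Set (Fin mi)) : ContDiff ℝ 1 (kktSys f g h I) := by
  have hs : ContDiff ℝ 2 fun w : (Fin l → ℝ) × (Fin n → ℝ) × (Fin me → ℝ) × (Fin mi → ℝ) =>
      (w.2.1, w.1) := by fun_prop
  refine ContDiff.prodMk (contDiff_pi.2 fun k => gradLag_contDiff f g h hf hg hh _)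
    (ContDiff.prodMk (contDiff_pi.2 fun i => ((hg i).comp hs).of_le (by norm_num))
      (contDiff_pi.2 fun j => ?_))
  by_cases hj : j ∈ I
  · simp only [hj, if_true]
    exact ((hh j).comp hs).of_le (by norm_num)
  · simp only [hj, if_false]
    fun_prop

theorem sum_mul_single (T : (Fin n → ℝ) →L[ℝ] ℝ) (d : Fin n → ℝ) :
    ∑ k, d k * T (Pi.single k 1) = T d := by
  conv_rhs => rw [pi_eq_sum_univ' d]
  simp [map_sum, Pi.single]

/-- Zeros of the system, with stationarity restated from components to the whole derivative. -/
theorem kktSys_eq_zero_iff (I : Set (Fin mi)) (p : Fin l → ℝ) (x : Fin n → ℝ) (y : Fin me → ℝ)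
    (z : Fin mi → ℝ) : kktSys f g h I (p, x, y, z) = 0 ↔
      fderiv ℝ (fun x' => Lag f g h p x' y z) x = 0 ∧ g x p = 0 ∧ (∀ j ∈ I, h x p j = 0) ∧
        ∀ j ∉ I, z j = 0 := by
  simp only [kktSys, Prod.mk_eq_zero]
  refine and_congr ⟨fun H => ?_, fun H => ?_⟩ (and_congr Iff.rfl ⟨fun H => ?_, fun H => ?_⟩)
  · ext1 d
    rw [← sum_mul_single]
    exact Finset.sum_eq_zero fun k _ => by rw [congrFun H k]; simp
  · rw [H]; rfl
  · exact ⟨fun j hj => by simpa [hj] using congrFun H j,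
      fun j hj => by simpa [hj] using congrFun H j⟩
  · funext j
    by_cases hj : j ∈ I
    · simpa [hj] using H.1 j hj
    · simpa [hj] using H.2 j hj

/-- Nonsingularity of the KKT matrix: the homogeneous linearized KKT system has only the trivial
solution. Testing the first row with `dx` kills the Hessian part, so SOSC gives `dx = 0`, and then
LICQ gives `dy = 0` and `dz = 0`. -/
theorem kkt_matrix_injective
    (hf : ContDiff ℝ 2 fun q : (Fin n → ℝ) × (Fin l → ℝ) => f q.1 q.2)
    (hg : ∀ i : Fin me, ContDiff ℝ 2 fun q : (Fin n → ℝ) × (Fin l → ℝ) => g q.1 q.2 i)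
    (hh : ∀ j : Fin mi, ContDiff ℝ 2 fun q : (Fin n → ℝ) × (Fin l → ℝ) => h q.1 q.2 j)
    {p : Fin l → ℝ} {x : Fin n → ℝ} {y : Fin me → ℝ} {z : Fin mi → ℝ}
    (hk : IsKKT f g h p x y z) (hl : LICQ g h p x)
    (hpos : ∀ d ∈ criticalCone f g h p x, d ≠ 0 →
      0 < hessQ (fun x' => Lag f g h p x' y z) x d)
    {dx : Fin n → ℝ} {dy : Fin me → ℝ} {dz : Fin mi → ℝ}
    (h1 : ∀ k : Fin n,
      fderiv ℝ (fun x' => fderiv ℝ (fun x'' => Lag f g h p x'' y z) x' (Pi.single k 1)) x dx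
        + (∑ i, dy i * fderiv ℝ (fun x' => g x' p i) x (Pi.single k 1))
        + (∑ j, dz j * fderiv ℝ (fun x' => h x' p j) x (Pi.single k 1)) = 0)
    (h2 : ∀ i, fderiv ℝ (fun x' => g x' p i) x dx = 0)
    (h3 : ∀ j, h x p j = 0 → fderiv ℝ (fun x' => h x' p j) x dx = 0)
    (h4 : ∀ j, h x p j ≠ 0 → dz j = 0) : dx = 0 ∧ dy = 0 ∧ dz = 0 := by
  have hL : ContDiff ℝ 2 (fun x' => Lag f g h p x' y z) := by
    have hc : ContDiff ℝ 2 fun x' : Fin n → ℝ => (p, x', y, z) := by fun_prop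
    exact (lag_contDiff f g h hf hg hh).comp hc
  have hL2 : Differentiable ℝ (fderiv ℝ (fun x' => Lag f g h p x' y z)) :=
    (hL.fderiv_right (m := 1) (by norm_num)).differentiable one_ne_zero
  have hH : ∀ v, fderiv ℝ (fun x' => fderiv ℝ (fun x'' => Lag f g h p x'' y z) x' v) x dx
      = fderiv ℝ (fderiv ℝ (fun x' => Lag f g h p x' y z)) x dx v := fun v => by
    rw [fderiv_clm_apply (hL2 x) (differentiableAt_const v)]
    simp
  have hz0 : ∀ j, h x p j ≠ 0 → z j = 0 := fun j hj =>
    (mul_eq_zero.1 (hk.compl j)).resolve_right hj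
  have hq : hessQ (fun x' => Lag f g h p x' y z) x dx = 0 := by
    -- sum of the first block row weighted by the entries of `dx`
    have hT := sum_mul_single (fderiv ℝ (fderiv ℝ (fun x' => Lag f g h p x' y z)) x dx
      + (∑ i, dy i • fderiv ℝ (fun x' => g x' p i) x)
      + (∑ j, dz j • fderiv ℝ (fun x' => h x' p j) x)) dx
    simp only [_root_.add_apply, _root_.sum_apply, _root_.smul_apply, smul_eq_mul, ← hH, h1,
      h2, mul_zero, Finset.sum_const_zero, add_zero] at hT
    rw [Finset.sum_eq_zero (s := Finset.univ) (f := fun j => dz j * _) fun j _ => ?_] at hT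
    · simpa [hessQ] using hT.symm
    · by_cases hj : h x p j = 0
      · rw [h3 j hj, mul_zero]
      · rw [h4 j hj, zero_mul]
  have hdx : dx = 0 := by
    by_contra hne
    refine (hpos dx ⟨le_of_eq ?_, h2, fun j hj => (h3 j hj).le⟩ hne).ne' hq
    have := congrArg (fun T => T dx) hk.1
    simp only [fderiv_lag f g h hf hg hh, _root_.zero_apply, h2, mul_zero, Finset.sum_const_zero,
      add_zero] at this
    rwa [Finset.sum_eq_zero fun j _ => ?_, add_zero] at this
    by_cases hj : h x p j = 0
    · rw [h3 j hj, mul_zero]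
    · rw [hz0 j hj, zero_mul]
  subst hdx
  exact ⟨rfl, hl.eq_zero dy dz h4 fun k => by simpa using h1 k⟩

/-- The partial derivative of the KKT system in `(x, y, z)` is invertible: it is an injective
endomorphism of a finite-dimensional space. -/
theorem kktSys_isInvertible
    (hf : ContDiff ℝ 2 fun q : (Fin n → ℝ) × (Fin l → ℝ) => f q.1 q.2)
    (hg : ∀ i : Fin me, ContDiff ℝ 2 fun q : (Fin n → ℝ) × (Fin l → ℝ) => g q.1 q.2 i)
    (hh : ∀ j : Fin mi, ContDiff ℝ 2 fun q : (Fin n → ℝ) × (Fin l → ℝ) => h q.1 q.2 j)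
    {p : Fin l → ℝ} {x : Fin n → ℝ} {y : Fin me → ℝ} {z : Fin mi → ℝ}
    (hk : IsKKT f g h p x y z) (hl : LICQ g h p x)
    (hpos : ∀ d ∈ criticalCone f g h p x, d ≠ 0 →
      0 < hessQ (fun x' => Lag f g h p x' y z) x d) :
    (fderiv ℝ (kktSys f g h {j | h x p j = 0}) (p, x, y, z) ∘L
      .inr ℝ (Fin l → ℝ) ((Fin n → ℝ) × (Fin me → ℝ) × (Fin mi → ℝ))).IsInvertible := by
  set I : Set (Fin mi) := {j | h x p j = 0} with hI
  have hD : HasFDerivAt (fun e => kktSys f g h I (p, e)) (fderiv ℝ (kktSys f g h I) (p, x, y, z) ∘L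
      .inr ℝ (Fin l → ℝ) ((Fin n → ℝ) × (Fin me → ℝ) × (Fin mi → ℝ))) (x, y, z) :=
    HasFDerivAt.comp (f := fun e => (p, e)) (x, y, z)
      ((kktSys_contDiff f g h hf hg hh I).differentiable one_ne_zero (p, x, y, z)).hasFDerivAt
      (hasFDerivAt_prodMk_right p (x, y, z))
  set T := fderiv ℝ (kktSys f g h I) (p, x, y, z) ∘L
      .inr ℝ (Fin l → ℝ) ((Fin n → ℝ) × (Fin me → ℝ) × (Fin mi → ℝ)) with hT
  have hinj : Function.Injective T.toLinearMap := by
    rw [injective_iff_map_eq_zero]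
    rintro ⟨dx, dy, dz⟩ (h0 : T (dx, dy, dz) = 0)
    have hX : DifferentiableAt ℝ (fun e : (Fin n → ℝ) × (Fin me → ℝ) × (Fin mi → ℝ) => e.1)
      (x, y, z) := by fun_prop
    have hY : DifferentiableAt ℝ (fun e : (Fin n → ℝ) × (Fin me → ℝ) × (Fin mi → ℝ) => e.2.1)
      (x, y, z) := by fun_prop
    have hZ : DifferentiableAt ℝ (fun e : (Fin n → ℝ) × (Fin me → ℝ) × (Fin mi → ℝ) => e.2.2)
      (x, y, z) := by fun_prop
    have hP : DifferentiableAt ℝ (fun _ : (Fin n → ℝ) × (Fin me → ℝ) × (Fin mi → ℝ) => p)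
      (x, y, z) := by fun_prop
    -- `X`, `Y`, `Z` are the coordinate projections; their derivatives pick out `dx`, `dy`, `dz`
    have eX : fderiv ℝ (fun e : (Fin n → ℝ) × (Fin me → ℝ) × (Fin mi → ℝ) => e.1) (x, y, z)
        (dx, dy, dz) = dx := by rw [hasFDerivAt_fst.fderiv]; rfl
    have eY : fderiv ℝ (fun e : (Fin n → ℝ) × (Fin me → ℝ) × (Fin mi → ℝ) => e.2.1) (x, y, z)
        (dx, dy, dz) = dy := by
      rw [(hasFDerivAt_snd (p := (x, y, z))).fst.fderiv]; rfl
    have eZ : fderiv ℝ (fun e : (Fin n → ℝ) × (Fin me → ℝ) × (Fin mi → ℝ) => e.2.2) (x, y, z)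
        (dx, dy, dz) = dz := by
      rw [(hasFDerivAt_snd (p := (x, y, z))).snd.fderiv]; rfl
    have r1 := fun k => (hasFDerivAt_pi'.1 hD.fst k).fderiv
    have r2 := fun i => (hasFDerivAt_pi'.1 hD.snd.fst i).fderiv
    have r3 := fun j => (hasFDerivAt_pi'.1 hD.snd.snd j).fderiv
    have hrow1 : ∀ k, fderiv ℝ (fun e => (kktSys f g h I (p, e)).1 k) (x, y, z) (dx, dy, dz) = 0 :=
      fun k => by rw [r1 k]; exact congrFun (congrArg Prod.fst h0) k
    have hrow2 : ∀ i, fderiv ℝ (fun e => (kktSys f g h I (p, e)).2.1 i) (x, y, z) (dx, dy, dz) = 0 :=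
      fun i => by rw [r2 i]; exact congrFun (congrArg (fun e => e.2.1) h0) i
    have hrow3 : ∀ j, fderiv ℝ (fun e => (kktSys f g h I (p, e)).2.2 j) (x, y, z) (dx, dy, dz) = 0 :=
      fun j => by rw [r3 j]; exact congrFun (congrArg (fun e => e.2.2) h0) j
    suffices key : dx = 0 ∧ dy = 0 ∧ dz = 0 by
      rw [key.1, key.2.1, key.2.2, Prod.mk_zero_zero, Prod.mk_zero_zero]
    refine kkt_matrix_injective f g h hf hg hh hk hl hpos (fun k => ?_) (fun i => ?_)
      (fun j hj => ?_) (fun j hj => ?_)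
    · have := (fderiv_gradLag f g h hf hg hh hX hY hZ hP (dx, dy, dz) (Pi.single k 1)).symm.trans
        (hrow1 k)
      rw [eX, eY, eZ, fderiv_const_apply] at this
      simpa using this
    · have := (fderiv_comp_two (ψ := fun x p => g x p i) ((hg i).differentiable two_ne_zero)
        hX hP (dx, dy, dz)).symm.trans (hrow2 i)
      rw [eX, fderiv_const_apply] at this
      simpa using this
    · have hfun : (fun e => (kktSys f g h I (p, e)).2.2 j) = fun e => h e.1 p j := by
        funext e; simp [kktSys, hI, hj]
      have h3 := hrow3 j
      rw [hfun] at h3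
      have := (fderiv_comp_two (ψ := fun x p => h x p j) ((hh j).differentiable two_ne_zero)
        hX hP (dx, dy, dz)).symm.trans h3
      rw [eX, fderiv_const_apply] at this
      simpa using this
    · have hfun : (fun e => (kktSys f g h I (p, e)).2.2 j) = fun e => e.2.2 j := by
        funext e; simp [kktSys, hI, hj]
      have h3 := hrow3 j
      rw [hfun, (hasFDerivAt_pi'.1 hZ.hasFDerivAt j).fderiv] at h3
      rw [← h3]
      exact (congrFun eZ j).symm
  exact ⟨(LinearEquiv.ofInjectiveEndo T.toLinearMap hinj).toContinuousLinearEquiv, by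
    exact ContinuousLinearMap.ext fun e => rfl⟩

/-! ### The solution map: existence, stability, Jacobian and uniqueness -/

/-- The implicit function theorem applied to the square KKT system. The last clause says that near
`(p, x, y, z)` the graph of `ψ` exhausts the zeros of the system. -/
theorem exists_implicit
    (hf : ContDiff ℝ 2 fun q : (Fin n → ℝ) × (Fin l → ℝ) => f q.1 q.2)
    (hg : ∀ i : Fin me, ContDiff ℝ 2 fun q : (Fin n → ℝ) × (Fin l → ℝ) => g q.1 q.2 i)
    (hh : ∀ j : Fin mi, ContDiff ℝ 2 fun q : (Fin n → ℝ) × (Fin l → ℝ) => h q.1 q.2 j)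
    {p : Fin l → ℝ} {x : Fin n → ℝ} {y : Fin me → ℝ} {z : Fin mi → ℝ}
    (hk : IsKKT f g h p x y z) (hl : LICQ g h p x)
    (hpos : ∀ d ∈ criticalCone f g h p x, d ≠ 0 →
      0 < hessQ (fun x' => Lag f g h p x' y z) x d) :
    ∃ ψ : (Fin l → ℝ) → (Fin n → ℝ) × (Fin me → ℝ) × (Fin mi → ℝ),
      ψ p = (x, y, z) ∧ ContDiffAt ℝ 1 ψ p ∧
      (∀ᶠ p' in 𝓝 p, kktSys f g h {j | h x p j = 0} (p', ψ p') = 0) ∧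
      ∀ᶠ v in 𝓝 (p, x, y, z), kktSys f g h {j | h x p j = 0} v = 0 → ψ v.1 = v.2 := by
  have h0 : kktSys f g h {j | h x p j = 0} (p, x, y, z) = 0 :=
    (kktSys_eq_zero_iff f g h _ p x y z).2 ⟨hk.1, hk.2.1, fun j hj => hj, fun j hj =>
      (mul_eq_zero.1 (hk.compl j)).resolve_right hj⟩
  have cdf : ContDiffAt ℝ 1 (kktSys f g h {j | h x p j = 0}) (p, x, y, z) :=
    (kktSys_contDiff f g h hf hg hh _).contDiffAt
  have hinv := kktSys_isInvertible f g h hf hg hh hk hl hpos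
  refine ⟨cdf.implicitFunction one_ne_zero hinv, cdf.implicitFunction_apply_self one_ne_zero hinv,
    cdf.contDiffAt_implicitFunction one_ne_zero hinv, ?_, ?_⟩
  · filter_upwards [cdf.eventually_apply_implicitFunction one_ne_zero hinv] with p' hp'
    rw [hp', h0]
  · filter_upwards [cdf.eventually_apply_eq_iff_implicitFunction one_ne_zero hinv] with v hv hv0
    exact hv.1 (by rw [hv0, h0])

/-- The partial gradient of a jointly C² function is jointly continuous. -/
theorem gradx_continuous {φ : (Fin n → ℝ) → (Fin l → ℝ) → ℝ}
    (hφ : ContDiff ℝ 2 fun q : (Fin n → ℝ) × (Fin l → ℝ) => φ q.1 q.2) :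
    Continuous fun q : (Fin n → ℝ) × (Fin l → ℝ) => gradx (fun x' => φ x' q.2) q.1 := by
  refine continuous_pi fun k => ContDiff.continuous (𝕜 := ℝ) (n := 1) ?_
  refine ContDiff.fderiv_apply (m := 2) (n := 1)
    (f := fun q : (Fin n → ℝ) × (Fin l → ℝ) => fun x' => φ x' q.2) ?_ contDiff_fst
    contDiff_const (by norm_num)
  have hs : ContDiff ℝ 2 fun u : ((Fin n → ℝ) × (Fin l → ℝ)) × (Fin n → ℝ) => (u.2, u.1.2) := by
    fun_prop
  exact hφ.comp hs

/-- LICQ is stable: it persists along a continuous primal path as long as no new constraint becomes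
active. -/
theorem LICQ.eventually {g : (Fin n → ℝ) → (Fin l → ℝ) → Fin me → ℝ}
    {h : (Fin n → ℝ) → (Fin l → ℝ) → Fin mi → ℝ}
    (hg : ∀ i : Fin me, ContDiff ℝ 2 fun q : (Fin n → ℝ) × (Fin l → ℝ) => g q.1 q.2 i)
    (hh : ∀ j : Fin mi, ContDiff ℝ 2 fun q : (Fin n → ℝ) × (Fin l → ℝ) => h q.1 q.2 j)
    {p : Fin l → ℝ} {X : (Fin l → ℝ) → Fin n → ℝ} (hX : ContinuousAt X p)
    (hl : LICQ g h p (X p)) :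
    ∀ᶠ p' in 𝓝 p, (∀ j, h (X p') p' j = 0 → h (X p) p j = 0) → LICQ g h p' (X p') := by
  have hXp : ContinuousAt (fun p' => (X p', p')) p := hX.prodMk continuousAt_id
  have hcont : ContinuousAt (fun p' => fun i : Fin me ⊕ {j : Fin mi // h (X p) p j = 0} =>
      Sum.elim (fun i => gradx (fun x' => g x' p' i) (X p'))
        (fun j => gradx (fun x' => h x' p' j.1) (X p')) i) p := by
    refine continuousAt_pi.2 fun i => ?_
    rcases i with i | j
    · exact ContinuousAt.comp (f := fun p' => (X p', p'))
        (gradx_continuous (φ := fun x p => g x p i) (hg i)).continuousAt hXp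
    · exact ContinuousAt.comp (f := fun p' => (X p', p'))
        (gradx_continuous (φ := fun x p => h x p j.1) (hh j.1)).continuousAt hXp
  filter_upwards [hcont.eventually (LinearIndependent.eventually hl)] with p' hp' hact
  -- the active gradients at `p'` form a subfamily of those indexed by the active set at `p`
  have := hp'.comp (Sum.map id fun j : {j : Fin mi // h (X p') p' j = 0} =>
      (⟨j.1, hact j.1 j.2⟩ : {j : Fin mi // h (X p) p j = 0}))
    (Function.Injective.sumMap Function.injective_id fun a b hab =>
      Subtype.ext (congrArg (fun t => t.1) hab))
  unfold LICQ
  refine Eq.subst (motive := fun v => LinearIndependent ℝ v) (funext fun i => ?_) this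
  rcases i with i | j <;> rfl

/-- Differentiating the identity `kktSys (p, x(p), y(p), z(p)) = 0` gives the linear system for the
Jacobian of the solution map. -/
theorem jacobian_rows
    (hf : ContDiff ℝ 2 fun q : (Fin n → ℝ) × (Fin l → ℝ) => f q.1 q.2)
    (hg : ∀ i : Fin me, ContDiff ℝ 2 fun q : (Fin n → ℝ) × (Fin l → ℝ) => g q.1 q.2 i)
    (hh : ∀ j : Fin mi, ContDiff ℝ 2 fun q : (Fin n → ℝ) × (Fin l → ℝ) => h q.1 q.2 j)
    {P : Fin mi → Prop} {p' : Fin l → ℝ} {X : (Fin l → ℝ) → Fin n → ℝ}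
    {Y : (Fin l → ℝ) → Fin me → ℝ} {Z : (Fin l → ℝ) → Fin mi → ℝ}
    (hX : DifferentiableAt ℝ X p') (hY : DifferentiableAt ℝ Y p') (hZ : DifferentiableAt ℝ Z p')
    (h0 : ∀ᶠ p in 𝓝 p', kktSys f g h {j | P j} (p, X p, Y p, Z p) = 0) (q : Fin l → ℝ) :
    (∀ k : Fin n,
      fderiv ℝ (fun x' => fderiv ℝ
          (fun x'' => Lag f g h p' x'' (Y p') (Z p')) x' (Pi.single k 1))
        (X p') (fderiv ℝ X p' q)
      + (∑ i, fderiv ℝ Y p' q i *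
          fderiv ℝ (fun x' => g x' p' i) (X p') (Pi.single k 1))
      + (∑ j : {j : Fin mi // P j}, fderiv ℝ Z p' q j.1 *
          fderiv ℝ (fun x' => h x' p' j.1) (X p') (Pi.single k 1))
      = - fderiv ℝ (fun p'' => fderiv ℝ
          (fun x'' => Lag f g h p'' x'' (Y p') (Z p')) (X p') (Pi.single k 1))
          p' q) ∧
    (∀ i, fderiv ℝ (fun x' => g x' p' i) (X p') (fderiv ℝ X p' q)
      = - fderiv ℝ (fun p'' => g (X p') p'' i) p' q) ∧
    (∀ j, P j →
      fderiv ℝ (fun x' => h x' p' j) (X p') (fderiv ℝ X p' q)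
      = - fderiv ℝ (fun p'' => h (X p') p'' j) p' q) := by
  simp only [kktSys_eq_zero_iff] at h0
  have hev : ∀ {φ : (Fin l → ℝ) → ℝ}, (∀ᶠ p in 𝓝 p', φ p = 0) → fderiv ℝ φ p' q = 0 :=
    fun {φ} hφ => by
      have e : φ =ᶠ[𝓝 p'] fun _ => 0 := hφ
      rw [e.fderiv_eq, fderiv_const_apply, _root_.zero_apply]
  have hid : DifferentiableAt ℝ (fun p : Fin l → ℝ => p) p' := differentiableAt_id
  refine ⟨fun k => ?_, fun i => ?_, fun j hj => ?_⟩
  · have e := (fderiv_gradLag f g h hf hg hh hX hY hZ hid q (Pi.single k 1)).symm.trans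
      (hev (h0.mono fun p hp => by rw [hp.1, _root_.zero_apply]))
    rw [fderiv_fun_id, ContinuousLinearMap.id_apply] at e
    rw [sum_subtype_eq (fun j => fderiv ℝ Z p' q j *
      fderiv ℝ (fun x' => h x' p' j) (X p') (Pi.single k 1)) fun j hj => ?_]
    · linarith
    · have := hev (h0.mono fun p hp => hp.2.2.2 j hj)
      rw [(hasFDerivAt_pi'.1 hZ.hasFDerivAt j).fderiv] at this
      have h2 : fderiv ℝ Z p' q j = 0 := this
      rw [h2, zero_mul]
  · have e := (fderiv_comp_two (ψ := fun x p => g x p i) ((hg i).differentiable two_ne_zero)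
      hX hid q).symm.trans (hev (h0.mono fun p hp => congrFun hp.2.1 i))
    rw [fderiv_fun_id, ContinuousLinearMap.id_apply] at e
    linarith
  · have e := (fderiv_comp_two (ψ := fun x p => h x p j) ((hh j).differentiable two_ne_zero)
      hX hid q).symm.trans (hev (h0.mono fun p hp => hp.2.2.1 j hj))
    rw [fderiv_fun_id, ContinuousLinearMap.id_apply] at e
    linarith

/-- Two continuous maps on a connected open set agree if they agree at one point and agreement is
an open condition. -/
theorem eqOn_of_locally_unique {A B : Type*} [TopologicalSpace A] [TopologicalSpace B] [T2Space B]
    {U : Set A} (hU : IsPreconnected U) (hUo : IsOpen U) {w ψ : A → B} (hw : ContinuousOn w U)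
    (hψ : ContinuousOn ψ U) {a : A} (ha : a ∈ U) (haw : w a = ψ a)
    (hloc : ∀ b ∈ U, w b = ψ b → ∀ᶠ b' in 𝓝 b, w b' = ψ b') : EqOn w ψ U := by
  have hopen : IsOpen {b | b ∈ U ∧ w b = ψ b} := isOpen_iff_mem_nhds.2 fun b hb =>
    (hUo.eventually_mem hb.1).and (hloc b hb.1 hb.2)
  refine fun b hb => (hU.subset_of_closure_inter_subset hopen ⟨a, ha, ha, haw⟩ ?_ hb).2
  rintro c ⟨hc, hcU⟩
  refine ⟨hcU, by_contra fun hne => ?_⟩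
  have := ((hw.continuousAt (hUo.mem_nhds hcU)).prodMk (hψ.continuousAt (hUo.mem_nhds hcU)))
    |>.eventually (isOpen_compl_iff.2 isClosed_diagonal |>.eventually_mem (x := (w c, ψ c)) hne)
  obtain ⟨b', hb', h'⟩ := ((mem_closure_iff_frequently.1 hc).and_eventually this).exists
  exact h' hb'.2

/-- **Fiacco's theorem.** Under SOSC, LICQ and SCS at a KKT point
$(x^*,y^*,z^*)$ of NLP($p^*$):
1. the primal-dual solution is unique (unique multiplier and strict local minimality);
2. there is a (unique) continuously differentiable local primal-dual solution map
   $w(p) = (x(p), y(p), z(p))$ (inactive multipliers set to zero), whose Jacobian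
   satisfies $M ⬝ J_p w = -N$ (expressed row-wise, directionally in $q$);
3. SCS and LICQ continue to hold along the solution path. -/
theorem fiacco_sensitivity
    (hf : ContDiff ℝ 2 fun q : (Fin n → ℝ) × (Fin l → ℝ) => f q.1 q.2)
    (hg : ∀ i : Fin me, ContDiff ℝ 2 fun q : (Fin n → ℝ) × (Fin l → ℝ) => g q.1 q.2 i)
    (hh : ∀ j : Fin mi, ContDiff ℝ 2 fun q : (Fin n → ℝ) × (Fin l → ℝ) => h q.1 q.2 j)
    (ps : Fin l → ℝ) (xs : Fin n → ℝ) (ys : Fin me → ℝ) (zs : Fin mi → ℝ)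
    (hkkt : IsKKT f g h ps xs ys zs)
    (hsosc : SOSC f g h ps xs)
    (hlicq : LICQ g h ps xs)
    (hscs : SCS h ps xs zs) :
    -- (1) uniqueness of the primal-dual solution
    (MultSet f g h ps xs = {(ys, zs)} ∧
      ∃ V ∈ 𝓝 xs, ∀ x' ∈ V, g x' ps = 0 → h x' ps ≤ 0 → x' ≠ xs →
        f xs ps < f x' ps) ∧
    -- (2) & (3)
    ∃ U : Set (Fin l → ℝ), IsOpen U ∧ ps ∈ U ∧
      ∃ (xf : (Fin l → ℝ) → Fin n → ℝ) (yf : (Fin l → ℝ) → Fin me → ℝ)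
        (zf : (Fin l → ℝ) → Fin mi → ℝ),
        -- continuously differentiable
        ContDiffOn ℝ 1 (fun p' => (xf p', yf p', zf p')) U ∧
        -- initial value
        (xf ps = xs ∧ yf ps = ys ∧ zf ps = zs) ∧
        -- KKT point of NLP(p), inactive multipliers set to zero
        (∀ p' ∈ U, IsKKT f g h p' (xf p') (yf p') (zf p')) ∧
        (∀ p' ∈ U, ∀ j, h xs ps j ≠ 0 → zf p' j = 0) ∧
        -- Jacobian equation M ⬝ J_p w(p) = -N, row by row, in every direction q
        (∀ p' ∈ U, ∀ q : Fin l → ℝ,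
          -- first block row: ∇²ₓₓL ⬝ (J_p x) q + (J_x g)ᵀ (J_p y) q + (J_x h_I)ᵀ (J_p z_I) q
          --                  = - ∇²ₓₚ L q
          (∀ k : Fin n,
            fderiv ℝ (fun x' => fderiv ℝ
                (fun x'' => Lag f g h p' x'' (yf p') (zf p')) x' (Pi.single k 1))
              (xf p') (fderiv ℝ xf p' q)
            + (∑ i, fderiv ℝ yf p' q i *
                fderiv ℝ (fun x' => g x' p' i) (xf p') (Pi.single k 1))
            + (∑ j : {j : Fin mi // h xs ps j = 0}, fderiv ℝ zf p' q j.1 *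
                fderiv ℝ (fun x' => h x' p' j.1) (xf p') (Pi.single k 1))
            = - fderiv ℝ (fun p'' => fderiv ℝ
                (fun x'' => Lag f g h p'' x'' (yf p') (zf p')) (xf p') (Pi.single k 1))
                p' q) ∧
          -- second block row: J_x g ⬝ (J_p x) q = - (J_p g) q
          (∀ i, fderiv ℝ (fun x' => g x' p' i) (xf p') (fderiv ℝ xf p' q)
            = - fderiv ℝ (fun p'' => g (xf p') p'' i) p' q) ∧
          -- third block row: J_x h_I ⬝ (J_p x) q = - (J_p h_I) q
          (∀ j, h xs ps j = 0 →
            fderiv ℝ (fun x' => h x' p' j) (xf p') (fderiv ℝ xf p' q)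
            = - fderiv ℝ (fun p'' => h (xf p') p'' j) p' q)) ∧
        -- (3) SCS and LICQ hold locally near ps
        (∀ p' ∈ U, SCS h p' (xf p') (zf p') ∧ LICQ g h p' (xf p')) ∧
        -- uniqueness of the C¹ solution map
        (∀ (xf' : (Fin l → ℝ) → Fin n → ℝ) (yf' : (Fin l → ℝ) → Fin me → ℝ)
            (zf' : (Fin l → ℝ) → Fin mi → ℝ),
          ContDiffOn ℝ 1 (fun p' => (xf' p', yf' p', zf' p')) U →
          (xf' ps = xs ∧ yf' ps = ys ∧ zf' ps = zs) →
          (∀ p' ∈ U, IsKKT f g h p' (xf' p') (yf' p') (zf' p')) →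
          (∀ p' ∈ U, ∀ j, h xs ps j ≠ 0 → zf' p' j = 0) →
          ∀ p' ∈ U, xf' p' = xf p' ∧ yf' p' = yf p' ∧ zf' p' = zf p') := by
  obtain ⟨⟨y₁, z₁⟩, hmem, hpos⟩ := hsosc
  have hM := multSet_eq f g h hf hg hh hkkt hlicq
  rw [hM, mem_singleton_iff, Prod.mk.injEq] at hmem
  obtain ⟨rfl, rfl⟩ := hmem
  refine ⟨⟨hM, strict_local_min f g h hf hg hh hkkt hpos⟩, ?_⟩
  obtain ⟨ψ, hψ0, hψd, hψF, huniq⟩ := exists_implicit f g h hf hg hh hkkt hlicq hpos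
  -- local uniqueness of `ψ` holds on the product neighbourhood `A × B`
  obtain ⟨A, B, hAo, hA, hBo, hB, hAB⟩ := mem_nhds_prod_iff'.1 huniq
  have hX0 : (ψ ps).1 = xs := by rw [hψ0]
  have hZ0 : (ψ ps).2.2 = z₁ := by rw [hψ0]
  have hψc : ContinuousAt ψ ps := hψd.continuousAt
  have hZpos : ∀ᶠ p' in 𝓝 ps, ∀ j, h xs ps j = 0 → 0 < (ψ p').2.2 j := by
    refine eventually_all.2 fun j => eventually_imp_distrib_left.2 fun hj => ?_
    have hc : ContinuousAt (fun p' => (ψ p').2.2 j) ps :=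
      (continuous_apply j).continuousAt.comp (f := fun p' => (ψ p').2.2) hψc.snd.snd
    refine hc.eventually_const_lt ?_
    beta_reduce
    rw [hZ0]
    exact (hkkt.2.2.2.1 j).lt_of_ne' (hscs j hj)
  have hneg : ∀ᶠ p' in 𝓝 ps, ∀ j, h xs ps j ≠ 0 → h (ψ p').1 p' j < 0 := by
    refine eventually_all.2 fun j => eventually_imp_distrib_left.2 fun hj => ?_
    have hc : ContinuousAt (fun p' => h (ψ p').1 p' j) ps :=
      (hh j).continuous.continuousAt.comp (f := fun p' => ((ψ p').1, p'))
        (hψc.fst.prodMk continuousAt_id)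
    refine hc.eventually_lt_const ?_
    beta_reduce
    rw [hX0]
    exact (hkkt.2.2.1 j).lt_of_ne hj
  have hLI : ∀ᶠ p' in 𝓝 ps, (∀ j, h (ψ p').1 p' j = 0 → h xs ps j = 0) →
      LICQ g h p' (ψ p').1 := by
    have := LICQ.eventually (X := fun p' => (ψ p').1) hg hh hψc.fst (by rwa [hX0])
    rwa [hX0] at this
  have hBev : ∀ᶠ p' in 𝓝 ps, ψ p' ∈ B := hψc.eventually_mem (hBo.mem_nhds (by rwa [hψ0]))
  -- a ball, so that the neighbourhood is connected for the uniqueness clause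
  obtain ⟨ε, hε, hU⟩ := Metric.eventually_nhds_iff_ball.1 ((((((hψF.and
    (hψd.eventually (by simp))).and (hAo.eventually_mem hA)).and hBev).and hZpos).and hneg).and hLI)
  set U := Metric.ball ps ε
  have hUo : IsOpen U := Metric.isOpen_ball
  have hpsU : ps ∈ U := Metric.mem_ball_self hε
  have hF : ∀ p' ∈ U, kktSys f g h {j | h xs ps j = 0}
      (p', (ψ p').1, (ψ p').2.1, (ψ p').2.2) = 0 := fun p' hp => (hU p' hp).1.1.1.1.1.1
  have hd : ∀ p' ∈ U, ContDiffAt ℝ 1 ψ p' := fun p' hp => (hU p' hp).1.1.1.1.1.2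
  have hK := fun p' hp => (kktSys_eq_zero_iff f g h _ _ _ _ _).1 (hF p' hp)
  have hact : ∀ p' ∈ U, ∀ j, h (ψ p').1 p' j = 0 → h xs ps j = 0 := fun p' hp j hj =>
    by_contra fun hne => ((hU p' hp).1.2 j hne).ne hj
  have hdiff : ∀ p' ∈ U, DifferentiableAt ℝ ψ p' := fun p' hp =>
    (hd p' hp).differentiableAt one_ne_zero
  refine ⟨U, hUo, hpsU, fun p' => (ψ p').1, fun p' => (ψ p').2.1, fun p' => (ψ p').2.2,
    fun p' hp => (hd p' hp).contDiffWithinAt, by simp [hψ0], fun p' hp => ?_,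
    fun p' hp j hj => (hK p' hp).2.2.2 j hj, fun p' hp q => ?_, fun p' hp => ⟨fun j hj => ?_, ?_⟩,
    fun xf' yf' zf' hw' hw0 hkkt' hz' => ?_⟩
  · obtain ⟨k1, k2, k3, k4⟩ := hK p' hp
    refine ⟨k1, k2, fun j => ?_, fun j => ?_, Finset.sum_eq_zero fun j _ => ?_⟩
    · by_cases hj : h xs ps j = 0
      · exact (k3 j hj).le
      · exact ((hU p' hp).1.2 j hj).le
    · by_cases hj : h xs ps j = 0
      · exact ((hU p' hp).1.1.2 j hj).le
      · exact (k4 j hj).ge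
    · beta_reduce
      by_cases hj : h xs ps j = 0
      · rw [k3 j hj, mul_zero]
      · rw [k4 j hj, zero_mul]
  · exact jacobian_rows f g h hf hg hh (X := fun p => (ψ p).1) (Y := fun p => (ψ p).2.1)
      (Z := fun p => (ψ p).2.2) (hdiff p' hp).fst (hdiff p' hp).snd.fst (hdiff p' hp).snd.snd
      ((hUo.eventually_mem hp).mono hF) q
  · exact ((hU p' hp).1.1.2 j (hact p' hp j hj)).ne'
  · exact (hU p' hp).2 (hact p' hp)
  · have heq : EqOn (fun p' => (xf' p', yf' p', zf' p')) ψ U := by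
      refine eqOn_of_locally_unique (convex_ball ps ε).isPreconnected hUo hw'.continuousOn
        (fun p' hp => (hd p' hp).continuousAt.continuousWithinAt) hpsU
        (by simp [hψ0, hw0]) fun b hb hwb => ?_
      have hwc : ContinuousAt (fun p' => (xf' p', yf' p', zf' p')) b :=
        hw'.continuousOn.continuousAt (hUo.mem_nhds hb)
      have hwB : ∀ᶠ b' in 𝓝 b, (xf' b', yf' b', zf' b') ∈ B :=
        hwc.eventually_mem (hBo.mem_nhds (by rw [hwb]; exact (hU b hb).1.1.1.2))
      -- positivity of the multipliers passes from `ψ b` to the competitor near `b`, and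
      -- complementarity then makes the same constraints active
      have hwpos : ∀ᶠ b' in 𝓝 b, ∀ j, h xs ps j = 0 → 0 < zf' b' j := by
        refine eventually_all.2 fun j => eventually_imp_distrib_left.2 fun hj => ?_
        have hc : ContinuousAt (fun p' => zf' p' j) b :=
          (continuous_apply j).continuousAt.comp (f := fun p' => zf' p') hwc.snd.snd
        refine hc.eventually_const_lt ?_
        have := (hU b hb).1.1.2 j hj
        rwa [← hwb] at this
      filter_upwards [hwB, hwpos, hUo.eventually_mem hb] with b' hb'B hb'pos hb'U
      have hk' := hkkt' b' hb'U
      refine (hAB (mk_mem_prod (hU b' hb'U).1.1.1.1.2 hb'B) ?_).symm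
      exact (kktSys_eq_zero_iff f g h _ _ _ _ _).2 ⟨hk'.1, hk'.2.1, fun j hj =>
        (mul_eq_zero.1 (hk'.compl j)).resolve_left (hb'pos j hj).ne', fun j hj =>
        hz' b' hb'U j hj⟩
    intro p' hp
    have := heq hp
    exact ⟨congrArg (fun t => t.1) this, congrArg (fun t => t.2.1) this,
      congrArg (fun t => t.2.2) this⟩

end SensNLP
end
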